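/- arXiv:2508.12521 — 2 statements merged into one kernel-verified Lean document; each statement's English description precedes it below -/
import Mathlib

section
/- Let n ≥ 1 and for each Dyck path π of semilength n let X(π) = ((d_1,a_1),…,(d_n,a_n)) be the tuple of (dinv, area) pairs of π. Then the family of images in DR_n of the bivariate Vandermonde determinants Δ_{X(π)}(x,y), as π ranges over all Dyck paths of semilength n, forms a ℂ-vector-space basis of the ideal A of DR_n generated by the alternating polynomials. -/
open MvPolynomial

/-- The area sequence of a Dyck path of semilength `n`: a tuple
`a : Fin n → ℕ` with first entry zero and `a (i+1) ≤ a i + 1`. -/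
def IsDyckArea {n : ℕ} (a : Fin n → ℕ) : Prop :=
  (∀ i : Fin n, (i : ℕ) = 0 → a i = 0) ∧
  (∀ i j : Fin n, (j : ℕ) = (i : ℕ) + 1 → a j ≤ a i + 1)

/-- The dinv sequence of a Dyck path encoded by its area sequence:
`d i = #{ j > i | a j = a i or a j = a i - 1 }`. -/
def dinvSeq {n : ℕ} (a : Fin n → ℕ) (i : Fin n) : ℕ :=
  (Finset.univ.filter (fun j : Fin n => i < j ∧ (a j = a i ∨ a j + 1 = a i))).card

/-- The bivariate Vandermonde determinant `Δ_X(x,y) = det (x_i^{α_j} y_i^{β_j})`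
for a tuple `X = ((α_1,β_1),…,(α_n,β_n))`, a polynomial in
`ℂ[x_1,…,x_n,y_1,…,y_n]` where `x i = X (Sum.inl i)` and `y i = X (Sum.inr i)`. -/
noncomputable def biVandermonde (n : ℕ) (E : Fin n → ℕ × ℕ) :
    MvPolynomial (Fin n ⊕ Fin n) ℂ :=
  Matrix.det (Matrix.of fun i j : Fin n =>
    (X (Sum.inl i) : MvPolynomial (Fin n ⊕ Fin n) ℂ) ^ (E j).1 *
      (X (Sum.inr i) : MvPolynomial (Fin n ⊕ Fin n) ℂ) ^ (E j).2)

/-- The ideal of `ℂ[x_1,…,x_n,y_1,…,y_n]` generated by all polynomials that are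
invariant under the diagonal `S_n`-action (permuting the `x` and `y` variables
simultaneously) and have zero constant term.  The diagonal coinvariant ring
`DR_n` is the quotient by this ideal. -/
noncomputable def invIdeal (n : ℕ) : Ideal (MvPolynomial (Fin n ⊕ Fin n) ℂ) :=
  Ideal.span {f | (∀ σ : Equiv.Perm (Fin n), rename (Sum.map σ σ) f = f) ∧
    constantCoeff f = 0}

/-- A polynomial is alternating if `σ · f = sign σ • f` for every `σ ∈ S_n`
acting diagonally. -/
def IsAltPoly (n : ℕ) (f : MvPolynomial (Fin n ⊕ Fin n) ℂ) : Prop :=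
  ∀ σ : Equiv.Perm (Fin n),
    rename (Sum.map σ σ) f = (Equiv.Perm.sign σ : ℤ) • f

/-- The ideal `A` of the diagonal coinvariant ring `DR_n` generated by the
images of all alternating polynomials. -/
noncomputable def altIdeal (n : ℕ) :
    Ideal (MvPolynomial (Fin n ⊕ Fin n) ℂ ⧸ invIdeal n) :=
  Ideal.span ((Ideal.Quotient.mk (invIdeal n)) '' {f | IsAltPoly n f})

noncomputable section DelContr

set_option linter.unusedSectionVars false
variable {τ : Type} [DecidableEq τ]

def dcRho (l : τ → ℕ) (s : Finset τ) (a u : ℕ) : MvPolynomial τ ℂ :=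
  ∑ i ∈ s with a ≤ l i, X i ^ u * ∏ k ∈ s with l k + 1 = a, (X i - X k)

def dcRhoP (l : τ → ℕ) (s : Finset τ) (a : ℕ) (g : Polynomial (MvPolynomial τ ℂ)) :
    MvPolynomial τ ℂ :=
  ∑ i ∈ s with a ≤ l i, g.eval (X i) * ∏ k ∈ s with l k + 1 = a, (X i - X k)

def dcInBox (l : τ → ℕ) (H : ℕ) (s : Finset τ) (α : τ →₀ ℕ) : Prop :=
  ∀ i ∈ s, α i + 1 < (s.filter (fun k => l k = l i)).card +
    (s.filter (fun k => l k + 1 = l i)).card + (if l i < H then 1 else 0)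

def dcJ (l : τ → ℕ) (H : ℕ) (s : Finset τ) : Ideal (MvPolynomial τ ℂ) :=
  Ideal.span {f | ∃ a u, (a < H → 1 ≤ u) ∧ f = dcRho l s a u}

def dcV (l : τ → ℕ) (H : ℕ) (s : Finset τ) : Submodule ℂ (MvPolynomial τ ℂ) :=
  Submodule.span ℂ ((fun α => monomial α (1:ℂ)) '' {α | dcInBox l H s α}) ⊔
  (dcJ l H s).restrictScalars ℂ ⊔
  Submodule.span ℂ {f | ∃ i ∈ s, ∃ j ∈ s, i ≠ j ∧ l i = l j ∧ rename (Equiv.swap i j) f = f}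

lemma dcV_le {l : τ → ℕ} {H : ℕ} {s : Finset τ} (T : Submodule ℂ (MvPolynomial τ ℂ))
    (h1 : ∀ α, dcInBox l H s α → monomial α (1:ℂ) ∈ T)
    (h2 : ∀ q a u, (a < H → 1 ≤ u) → q * dcRho l s a u ∈ T)
    (h3 : ∀ f, ∀ i ∈ s, ∀ j ∈ s, i ≠ j → l i = l j → rename (Equiv.swap i j) f = f → f ∈ T) :
    dcV l H s ≤ T := by
  refine sup_le (sup_le ?_ ?_) ?_
  · rw [Submodule.span_le]; rintro _ ⟨α, hα, rfl⟩; exact h1 α hα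
  · intro f hf
    rw [Submodule.restrictScalars_mem, dcJ] at hf
    refine Submodule.span_induction (p := fun f _ => ∀ q, q * f ∈ T) ?_ ?_ ?_ ?_ hf 1 |> (by simpa using ·)
    · rintro _ ⟨a, u, h, rfl⟩ q; exact h2 q a u h
    · intro q; simp
    · intro x y _ _ hx hy q; rw [mul_add]; exact T.add_mem (hx q) (hy q)
    · intro r x _ hx q; rw [smul_eq_mul, ← mul_assoc]; exact hx _
  · rw [Submodule.span_le]; rintro f ⟨i, hi, j, hj, h1, h2, h4⟩; exact h3 f i hi j hj h1 h2 h4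

lemma dcV_box {l : τ → ℕ} {H : ℕ} {s : Finset τ} {α} (h : dcInBox l H s α) :
    monomial α (1:ℂ) ∈ dcV l H s :=
  Submodule.mem_sup_left (Submodule.mem_sup_left (Submodule.subset_span ⟨α, h, rfl⟩))

lemma dcV_J {l : τ → ℕ} {H : ℕ} {s : Finset τ} {f} (h : f ∈ dcJ l H s) : f ∈ dcV l H s :=
  Submodule.mem_sup_left (Submodule.mem_sup_right h)

lemma dcV_K {l : τ → ℕ} {H : ℕ} {s : Finset τ} {f} {i j} (hi : i ∈ s) (hj : j ∈ s) (hij : i ≠ j)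
    (hl : l i = l j) (h : rename (Equiv.swap i j) f = f) : f ∈ dcV l H s :=
  Submodule.mem_sup_right (Submodule.subset_span ⟨i, hi, j, hj, hij, hl, h⟩)

lemma dcJ_rho {l : τ → ℕ} {H : ℕ} {s : Finset τ} {a u} (h : a < H → 1 ≤ u) :
    dcRho l s a u ∈ dcJ l H s := Ideal.subset_span ⟨a, u, h, rfl⟩

lemma dcRhoP_mem {l : τ → ℕ} {s : Finset τ} {a} (J : Ideal (MvPolynomial τ ℂ)) (v : ℕ)
    (h : ∀ u, dcRho l s a (u + v) ∈ J) (g) : dcRhoP l s a (Polynomial.X ^ v * g) ∈ J := by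
  induction g using Polynomial.induction_on' with
  | add p q hp hq =>
    have : dcRhoP l s a (Polynomial.X ^ v * (p + q)) =
      dcRhoP l s a (Polynomial.X ^ v * p) + dcRhoP l s a (Polynomial.X ^ v * q) := by
      simp only [dcRhoP, mul_add, Polynomial.eval_add, add_mul, Finset.sum_add_distrib]
    rw [this]; exact J.add_mem hp hq
  | monomial n c =>
    have : dcRhoP l s a (Polynomial.X ^ v * Polynomial.monomial n c) = c * dcRho l s a (n + v) := by
      simp only [dcRhoP, dcRho, Finset.mul_sum]
      refine Finset.sum_congr rfl fun i _ => ?_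
      simp only [Polynomial.eval_mul, Polynomial.eval_pow, Polynomial.eval_X,
        Polynomial.eval_monomial]
      ring
    rw [this]; exact J.mul_mem_left _ (h n)

lemma dc_e_rho (l : τ → ℕ) (H : ℕ) (s : Finset τ) :
    (∏ i ∈ s with l i = H, X i) * dcRho l s H 0 ∈ dcJ l (H + 1) s := by
  set P : Polynomial (MvPolynomial τ ℂ) :=
    ∏ v ∈ s with l v = H, (Polynomial.X - Polynomial.C (X v)) with hP
  set g : Polynomial (MvPolynomial τ ℂ) :=
    ∏ v ∈ s with l v + 1 = H, (Polynomial.X - Polynomial.C (X v)) with hg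
  have h1 : dcRhoP l s (H+1) g ∈ dcJ l (H+1) s := by
    have := dcRhoP_mem (l := l) (s := s) (a := H+1) (dcJ l (H+1) s) 0
      (fun u => dcJ_rho (by omega)) g
    simpa using this
  have h2 : dcRhoP l s H (Polynomial.X * P.divX) ∈ dcJ l (H+1) s := by
    have := dcRhoP_mem (l := l) (s := s) (a := H) (dcJ l (H+1) s) 1
      (fun u => dcJ_rho (by omega)) P.divX
    simpa using this
  have h3 : dcRhoP l s (H+1) g = dcRhoP l s H P := by
    simp only [dcRhoP]
    have : (s.filter fun i => H + 1 ≤ l i) ⊆ (s.filter fun i => H ≤ l i) := by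
      intro i; simp only [Finset.mem_filter]; rintro ⟨h, h'⟩; exact ⟨h, by omega⟩
    rw [← Finset.sum_subset this]
    · refine Finset.sum_congr rfl fun i _ => ?_
      simp [hg, hP, Polynomial.eval_prod, mul_comm]
    · intro i hi hi'
      simp only [Finset.mem_filter, not_and, not_le] at hi hi'
      have : P.eval (X i) = 0 := by
        rw [hP, Polynomial.eval_prod]
        refine Finset.prod_eq_zero (i := i) ?_ (by simp)
        simp only [Finset.mem_filter]; have := hi' hi.1; exact ⟨hi.1, by omega⟩
      rw [this, zero_mul]
  have h4 : dcRhoP l s H P = dcRhoP l s H (Polynomial.X * P.divX) + P.coeff 0 * dcRho l s H 0 := by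
    conv_lhs => rw [← Polynomial.X_mul_divX_add P]
    simp only [dcRhoP, dcRho, Polynomial.eval_add, add_mul, Finset.sum_add_distrib, Finset.mul_sum]
    simp
  have h5 : P.coeff 0 = (-1) ^ (s.filter fun i => l i = H).card * ∏ i ∈ s with l i = H, X i := by
    rw [Polynomial.coeff_zero_eq_eval_zero, hP, Polynomial.eval_prod]
    simp [Finset.prod_neg]
  have h6 : P.coeff 0 * dcRho l s H 0 ∈ dcJ l (H+1) s := by
    have := (dcJ l (H+1) s).sub_mem h1 h2
    rwa [h3, h4, add_sub_cancel_left] at this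
  rw [h5] at h6
  have := (dcJ l (H+1) s).mul_mem_left ((-1) ^ (s.filter fun i => l i = H).card) h6
  rwa [← mul_assoc, ← mul_assoc, ← mul_pow, neg_one_mul, neg_neg, one_pow, one_mul] at this

lemma dc_prod_X (W : Finset τ) : (∏ i ∈ W, X i : MvPolynomial τ ℂ) =
    monomial (∑ i ∈ W, Finsupp.single i 1) 1 := by
  rw [monomial_sum_one]; rfl

lemma dc_rename_prod (W : Finset τ) (i j : τ) (h : i ∈ W ↔ j ∈ W) :
    rename (Equiv.swap i j) (∏ k ∈ W, X k : MvPolynomial τ ℂ) = ∏ k ∈ W, X k := by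
  rw [map_prod]
  simp only [rename_X]
  refine Finset.prod_equiv (Equiv.swap i j) ?_ (fun _ _ => rfl)
  intro k
  by_cases h1 : k = i
  · subst h1; simp [h]
  by_cases h2 : k = j
  · subst h2; simp [h]
  rw [Equiv.swap_apply_of_ne_of_ne h1 h2]

lemma dc_ind_apply (W : Finset τ) (k : τ) :
    (∑ i ∈ W, Finsupp.single i 1 : τ →₀ ℕ) k = if k ∈ W then 1 else 0 := by
  simp [Finsupp.finsetSum_apply, Finsupp.single_apply]

lemma dc_step1 (l : τ → ℕ) (H : ℕ) (s : Finset τ) (f : MvPolynomial τ ℂ) (hf : f ∈ dcV l H s) :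
    (∏ i ∈ s with l i = H, X i) * f ∈ dcV l (H + 1) s := by
  suffices h : dcV l H s ≤
      (dcV l (H+1) s).comap (LinearMap.mulLeft ℂ (∏ i ∈ s with l i = H, X i)) from h hf
  refine dcV_le _ ?_ ?_ ?_
  · intro α hα
    rw [Submodule.mem_comap, LinearMap.mulLeft_apply, dc_prod_X, monomial_mul, one_mul]
    apply dcV_box
    intro i hi
    have := hα i hi
    rw [Finsupp.add_apply, dc_ind_apply]
    simp only [Finset.mem_filter, hi, true_and]
    split_ifs at this ⊢ <;> omega
  · intro q a u h
    rw [Submodule.mem_comap, LinearMap.mulLeft_apply]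
    apply dcV_J
    by_cases h' : a < H + 1 → 1 ≤ u
    · exact Ideal.mul_mem_left _ _ (Ideal.mul_mem_left _ _ (dcJ_rho h'))
    · have ha : a = H := by omega
      have hu : u = 0 := by omega
      subst ha hu
      rw [mul_left_comm]
      exact Ideal.mul_mem_left _ _ (dc_e_rho l a s)
  · intro f i hi j hj hij hl hf
    rw [Submodule.mem_comap, LinearMap.mulLeft_apply]
    refine dcV_K hi hj hij hl ?_
    rw [map_mul, hf, dc_rename_prod]
    simp [hi, hj, hl]

lemma dc_card_erase (s : Finset τ) (i : τ) (hi : i ∈ s) (p : τ → Prop) [DecidablePred p] :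
    ((s.erase i).filter p).card + (if p i then 1 else 0) = (s.filter p).card := by
  rw [← Finset.insert_erase hi, Finset.filter_insert, Finset.erase_insert (Finset.notMem_erase i s)]
  split_ifs with h
  · rw [Finset.card_insert_of_notMem (by simp)]
  · rfl

lemma dc_rho_erase (l : τ → ℕ) (H : ℕ) (s : Finset τ) (i : τ) (hi : i ∈ s) (hl : l i = H)
    (a u : ℕ) (h : a < H + 2 → 1 ≤ u) :
    ∃ j ∈ dcJ l (H+1) s, ∃ r, dcRho l (s.erase i) a u = j + X i * r := by
  rcases lt_trichotomy a (H+1) with ha | ha | ha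
  · obtain ⟨u, rfl⟩ : ∃ v, u = v + 1 := ⟨u - 1, by have := h (by omega); omega⟩
    refine ⟨dcRho l s a (u+1), dcJ_rho (by omega),
      - (X i ^ u * ∏ k ∈ s with l k + 1 = a, (X i - X k)), ?_⟩
    have hZ : (s.erase i).filter (fun k => l k + 1 = a) = s.filter (fun k => l k + 1 = a) := by
      ext k; simp only [Finset.mem_filter, Finset.mem_erase]
      constructor
      · tauto
      · rintro ⟨h1, h2⟩; refine ⟨⟨?_, h1⟩, h2⟩; rintro rfl; omega
    have hY : (s.filter (fun k => a ≤ l k)) = insert i ((s.erase i).filter (fun k => a ≤ l k)) := by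
      conv_lhs => rw [← Finset.insert_erase hi, Finset.filter_insert, if_pos (by omega)]
    simp only [dcRho]
    rw [hY, Finset.sum_insert (by simp), hZ]
    ring
  · obtain ⟨u, rfl⟩ : ∃ v, u = v + 1 := ⟨u - 1, by have := h (by omega); omega⟩
    refine ⟨dcRho l s a u, dcJ_rho (by omega), dcRho l (s.erase i) a u, ?_⟩
    have hY : (s.filter (fun k => a ≤ l k)) = ((s.erase i).filter (fun k => a ≤ l k)) := by
      conv_lhs => rw [← Finset.insert_erase hi, Finset.filter_insert, if_neg (by omega)]
    have hZ : (s.filter (fun k => l k + 1 = a)) =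
        insert i ((s.erase i).filter (fun k => l k + 1 = a)) := by
      conv_lhs => rw [← Finset.insert_erase hi, Finset.filter_insert, if_pos (by omega)]
    simp only [dcRho]
    rw [hY, hZ, Finset.mul_sum, ← Finset.sum_add_distrib]
    refine Finset.sum_congr rfl fun k _ => ?_
    rw [Finset.prod_insert (by simp)]
    ring
  · refine ⟨dcRho l s a u, dcJ_rho (by omega), 0, ?_⟩
    have hY : (s.filter (fun k => a ≤ l k)) = ((s.erase i).filter (fun k => a ≤ l k)) := by
      conv_lhs => rw [← Finset.insert_erase hi, Finset.filter_insert, if_neg (by omega)]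
    have hZ : (s.filter (fun k => l k + 1 = a)) =
        ((s.erase i).filter (fun k => l k + 1 = a)) := by
      conv_lhs => rw [← Finset.insert_erase hi, Finset.filter_insert, if_neg (by omega)]
    simp only [dcRho]
    rw [hY, hZ, mul_zero, add_zero]

lemma dc_step3 (l : τ → ℕ) (H : ℕ) (s : Finset τ) (i : τ) (hi : i ∈ s) (hl : l i = H)
    (he : ∀ f, (∏ k ∈ s with l k = H, X k) * f ∈ dcV l (H + 1) s)
    (f : MvPolynomial τ ℂ) (hf : f ∈ dcV l (H+2) (s.erase i)) :
    (∏ k ∈ s.erase i with l k = H, X k) * f ∈ dcV l (H + 1) s := by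
  have hW : (s.filter (fun k => l k = H)) = insert i ((s.erase i).filter (fun k => l k = H)) := by
    conv_lhs => rw [← Finset.insert_erase hi, Finset.filter_insert, if_pos hl]
  have he' : ∀ f, (∏ k ∈ s.erase i with l k = H, X k) * (X i * f) ∈ dcV l (H + 1) s := by
    intro f
    have := he f
    rw [hW, Finset.prod_insert (by simp)] at this
    rwa [← mul_assoc, mul_comm _ (X i)]
  suffices h : dcV l (H+2) (s.erase i) ≤
      (dcV l (H+1) s).comap (LinearMap.mulLeft ℂ (∏ k ∈ s.erase i with l k = H, X k)) from h hf
  refine dcV_le _ ?_ ?_ ?_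
  · intro α hα
    rw [Submodule.mem_comap, LinearMap.mulLeft_apply]
    by_cases h0 : α i = 0
    · rw [dc_prod_X, monomial_mul, one_mul]
      apply dcV_box
      intro j hj
      rw [Finsupp.add_apply, dc_ind_apply]
      have c1 := dc_card_erase s i hi (fun k => l k = l j)
      have c2 := dc_card_erase s i hi (fun k => l k + 1 = l j)
      by_cases hji : j = i
      · subst hji
        simp only [if_pos] at c1
        simp [h0]
        rw [if_pos (by omega)]
        omega
      · have := hα j (Finset.mem_erase.2 ⟨hji, hj⟩)
        simp only [Finset.mem_filter, Finset.mem_erase, hj, hji, ne_eq, not_false_eq_true, true_and]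
        split_ifs at c1 c2 this ⊢ <;> omega
    · have : (monomial α (1:ℂ)) = X i * monomial (α - Finsupp.single i 1) 1 := by
        rw [X, monomial_mul, one_mul, add_tsub_cancel_of_le]
        rw [Finsupp.single_le_iff]; omega
      rw [this]; exact he' _
  · intro q a u h
    rw [Submodule.mem_comap, LinearMap.mulLeft_apply]
    obtain ⟨j, hj, r, hr⟩ := dc_rho_erase l H s i hi hl a u h
    rw [hr, mul_add q, mul_add, mul_left_comm q]
    exact Submodule.add_mem _ (dcV_J (Ideal.mul_mem_left _ _ (Ideal.mul_mem_left _ _ hj))) (he' _)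
  · intro f k hk j hj hkj hl' hf
    rw [Submodule.mem_comap, LinearMap.mulLeft_apply]
    refine dcV_K (Finset.mem_of_mem_erase hk) (Finset.mem_of_mem_erase hj) hkj hl' ?_
    rw [map_mul, hf, dc_rename_prod]
    simp only [Finset.mem_filter, hk, hj, hl']

lemma dc_eq_top_of_monomials (V : Submodule ℂ (MvPolynomial τ ℂ))
    (h : ∀ α, monomial α (1:ℂ) ∈ V) : V = ⊤ := by
  rw [eq_top_iff]
  intro f _
  rw [f.as_sum]
  refine V.sum_mem fun α _ => ?_
  have := V.smul_mem (coeff α f) (h α)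
  rwa [smul_monomial, smul_eq_mul, mul_one] at this

theorem dc_main (l : τ → ℕ) (c : ℕ) : ∀ (H : ℕ) (s : Finset τ), s.card = c → dcV l H s = ⊤ := by
  induction c using Nat.strong_induction_on with
  | _ c IH =>
  intro H
  induction H with
  | zero =>
    intro s hs
    rcases s.eq_empty_or_nonempty with rfl | hne
    · exact dc_eq_top_of_monomials _ fun α => dcV_box (by intro i hi; simp at hi)
    · have : dcJ l 0 s = ⊤ := by
        rw [Ideal.eq_top_iff_one]
        have h := dcJ_rho (l := l) (H := 0) (s := s) (a := 0) (u := 0) (by omega)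
        have h2 : dcRho l s 0 0 = C (s.card : ℂ) := by
          simp [dcRho]
        rw [h2] at h
        have h3 := (dcJ l 0 s).mul_mem_left (C (s.card : ℂ)⁻¹) h
        rwa [← C_mul, inv_mul_cancel₀ (by simpa using hne.ne_empty), C_1] at h3
      rw [eq_top_iff]
      intro f _
      exact dcV_J (by rw [this]; trivial)
  | succ H ihH =>
    intro s hs
    have he : ∀ f, (∏ k ∈ s with l k = H, X k) * f ∈ dcV l (H + 1) s := fun f =>
      dc_step1 l H s f (by rw [ihH s hs]; trivial)
    refine dc_eq_top_of_monomials _ fun α => ?_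
    by_cases h0 : ∃ i ∈ s, l i = H ∧ α i = 0
    · obtain ⟨i, hi, hl, hα⟩ := h0
      by_cases h1 : ∃ j ∈ s, l j = H ∧ α j = 0 ∧ j ≠ i
      · obtain ⟨j, hj, hlj, hαj, hji⟩ := h1
        refine dcV_K hi hj hji.symm (by omega) ?_
        rw [rename_monomial]
        suffices hh : Finsupp.mapDomain (Equiv.swap i j) α = α by rw [hh]
        ext k
        rw [Finsupp.mapDomain_equiv_apply, Equiv.symm_swap]
        by_cases k1 : k = i
        · subst k1; simp [hα, hαj]
        by_cases k2 : k = j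
        · subst k2; simp [hα, hαj]
        rw [Equiv.swap_apply_of_ne_of_ne k1 k2]
      · push Not at h1
        have hh : monomial α (1:ℂ) = (∏ k ∈ s.erase i with l k = H, X k) *
          monomial (α - ∑ k ∈ s.erase i with l k = H, Finsupp.single k 1) 1 := by
          rw [dc_prod_X, monomial_mul, one_mul, add_tsub_cancel_of_le]
          intro k
          rw [dc_ind_apply]
          split_ifs with hk
          · simp only [Finset.mem_filter, Finset.mem_erase] at hk
            by_contra h3
            exact hk.1.1 (h1 k hk.1.2 hk.2 (by omega))
          · omega
        rw [hh]
        refine dc_step3 l H s i hi hl he _ ?_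
        rw [IH _ _ (H+2) (s.erase i) rfl]; trivial
        rw [← hs]; exact Finset.card_erase_lt_of_mem hi
    · push Not at h0
      have hh : monomial α (1:ℂ) = (∏ k ∈ s with l k = H, X k) *
          monomial (α - ∑ k ∈ s with l k = H, Finsupp.single k 1) 1 := by
          rw [dc_prod_X, monomial_mul, one_mul, add_tsub_cancel_of_le]
          intro k
          rw [dc_ind_apply]
          split_ifs with hk
          · simp only [Finset.mem_filter] at hk
            have := h0 k hk.1 hk.2; omega
          · omega
      rw [hh]; exact he _

end DelContr

noncomputable section AltPart

variable {n : ℕ}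

abbrev RR (n : ℕ) := MvPolynomial (Fin n ⊕ Fin n) ℂ

def pact (σ : Equiv.Perm (Fin n)) : RR n →ₐ[ℂ] RR n := rename (Sum.map σ σ)

def zp (m : Fin n) (p : ℕ × ℕ) : RR n := X (Sum.inl m) ^ p.1 * X (Sum.inr m) ^ p.2

def zmon (e : Fin n → ℕ × ℕ) : RR n := ∏ i, zp i (e i)

def AltL (n : ℕ) : RR n →ₗ[ℂ] RR n :=
  ∑ σ : Equiv.Perm (Fin n), (Equiv.Perm.sign σ : ℤ) • (pact σ).toLinearMap

lemma AltL_apply (f : RR n) : AltL n f = ∑ σ : Equiv.Perm (Fin n),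
    (Equiv.Perm.sign σ : ℤ) • pact σ f := by
  simp [AltL]

lemma pact_mul (σ τ : Equiv.Perm (Fin n)) (f : RR n) : pact (σ * τ) f = pact σ (pact τ f) := by
  simp only [pact, rename_rename, Sum.map_comp_map]; rfl

lemma pact_one (f : RR n) : pact 1 f = f := by
  simp [pact]

lemma sgn_sq (τ : Equiv.Perm (Fin n)) : (Equiv.Perm.sign τ : ℤ) * (Equiv.Perm.sign τ : ℤ) = 1 := by
  rw [← Units.val_mul, Int.units_mul_self, Units.val_one]

lemma pact_AltL (τ : Equiv.Perm (Fin n)) (f : RR n) :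
    pact τ (AltL n f) = (Equiv.Perm.sign τ : ℤ) • AltL n f := by
  rw [AltL_apply, map_sum, Finset.smul_sum, ← Equiv.sum_comp (Equiv.mulLeft τ)
    (fun σ => (Equiv.Perm.sign τ : ℤ) • (Equiv.Perm.sign σ : ℤ) • pact σ f)]
  refine Finset.sum_congr rfl fun σ _ => ?_
  rw [Equiv.coe_mulLeft, pact_mul, Equiv.Perm.sign_mul, map_zsmul, smul_smul, Units.val_mul,
    ← mul_assoc, sgn_sq, one_mul]

lemma AltL_pact (τ : Equiv.Perm (Fin n)) (f : RR n) :
    AltL n (pact τ f) = (Equiv.Perm.sign τ : ℤ) • AltL n f := by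
  rw [AltL_apply, AltL_apply, Finset.smul_sum, ← Equiv.sum_comp (Equiv.mulRight τ)
    (fun σ => (Equiv.Perm.sign τ : ℤ) • (Equiv.Perm.sign σ : ℤ) • pact σ f)]
  refine Finset.sum_congr rfl fun σ _ => ?_
  rw [Equiv.coe_mulRight, pact_mul, Equiv.Perm.sign_mul, smul_smul, Units.val_mul,
    mul_left_comm, sgn_sq, mul_one]

lemma isAlt_AltL (f : RR n) : IsAltPoly n (AltL n f) := fun σ => pact_AltL σ f

lemma AltL_of_isAlt (f : RR n) (h : IsAltPoly n f) : AltL n f = (n.factorial : ℂ) • f := by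
  rw [AltL_apply]
  have : ∀ σ : Equiv.Perm (Fin n), (Equiv.Perm.sign σ : ℤ) • pact σ f = f := by
    intro σ
    rw [show pact σ f = _ from h σ, smul_smul, sgn_sq, one_smul]
  simp only [this, Finset.sum_const, Finset.card_univ, Fintype.card_perm, Fintype.card_fin]
  rw [Nat.cast_smul_eq_nsmul]

lemma eq_AltL_of_isAlt (f : RR n) (h : IsAltPoly n f) : f = AltL n ((n.factorial : ℂ)⁻¹ • f) := by
  rw [map_smul, AltL_of_isAlt f h, smul_smul, inv_mul_cancel₀, one_smul]
  exact_mod_cast n.factorial_ne_zero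

lemma AltL_symm_mul (s f : RR n) (hs : ∀ σ, pact σ s = s) : AltL n (s * f) = s * AltL n f := by
  simp only [AltL_apply, map_mul, hs, Finset.mul_sum, mul_smul_comm]

lemma self_neg_zero {f : RR n} (h : f = -f) : f = 0 := by
  exact self_eq_neg.mp h

lemma AltL_swap (i j : Fin n) (hij : i ≠ j) (f : RR n) :
    AltL n (pact (Equiv.swap i j) f) = - AltL n f := by
  rw [AltL_pact, Equiv.Perm.sign_swap hij]; simp

lemma AltL_eq_zero (i j : Fin n) (hij : i ≠ j) (f : RR n) (h : pact (Equiv.swap i j) f = f) :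
    AltL n f = 0 := by
  apply self_neg_zero
  conv_lhs => rw [← h, AltL_swap i j hij]

lemma pact_zp (σ : Equiv.Perm (Fin n)) (m : Fin n) (p) : pact σ (zp m p) = zp (σ m) p := by
  simp [pact, zp]

lemma zp_add (m : Fin n) (p q) : zp m (p + q) = zp m p * zp m q := by
  simp only [zp, Prod.fst_add, Prod.snd_add]; ring

lemma pact_zmon (σ : Equiv.Perm (Fin n)) (e) : pact σ (zmon e) = zmon (e ∘ σ.symm) := by
  simp only [zmon, map_prod, pact_zp]
  rw [← Equiv.prod_comp σ (fun i => zp i ((e ∘ σ.symm) i))]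
  simp

lemma AltL_zmon (e : Fin n → ℕ × ℕ) : AltL n (zmon e) = ∑ σ : Equiv.Perm (Fin n),
    (Equiv.Perm.sign σ : ℤ) • zmon (e ∘ σ) := by
  rw [AltL_apply, ← Equiv.sum_comp (Equiv.inv (Equiv.Perm (Fin n)))]
  refine Finset.sum_congr rfl fun σ _ => ?_
  rw [pact_zmon]; simp; rfl

lemma biVandermonde_eq (E : Fin n → ℕ × ℕ) : biVandermonde n E = AltL n (zmon E) := by
  rw [biVandermonde, Matrix.det_apply, AltL_apply]
  refine Finset.sum_congr rfl fun σ _ => ?_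
  rw [zmon, map_prod]
  simp only [pact_zp]
  simp only [Matrix.of_apply, zp]
  rfl

lemma AltL_zmon_perm (E : Fin n → ℕ × ℕ) (σ : Equiv.Perm (Fin n)) :
    AltL n (zmon (E ∘ σ)) = (Equiv.Perm.sign σ : ℤ) • AltL n (zmon E) := by
  have := AltL_pact σ.symm (zmon E)
  rw [pact_zmon] at this
  simpa using this

lemma AltL_zmon_eq_zero (E : Fin n → ℕ × ℕ) (i j : Fin n) (hij : i ≠ j) (h : E i = E j) :
    AltL n (zmon E) = 0 := by
  refine AltL_eq_zero i j hij _ ?_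
  rw [pact_zmon]
  congr 1
  ext1 k
  simp only [Function.comp, Equiv.symm_swap, Equiv.swap_apply_def]
  split_ifs <;> simp_all

lemma psum_mem (p : ℕ × ℕ) (hp : p ≠ 0) : ∑ m : Fin n, zp m p ∈ invIdeal n := by
  refine Ideal.subset_span ⟨fun σ => ?_, ?_⟩
  · change pact σ _ = _
    rw [map_sum]; simp only [pact_zp]
    exact Equiv.sum_comp σ (fun m => zp m p)
  · rw [map_sum]
    refine Finset.sum_eq_zero fun m _ => ?_
    simp only [zp, map_mul, map_pow, constantCoeff_X]
    by_cases h : p.1 = 0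
    · have : p.2 ≠ 0 := fun h' => hp (Prod.ext h h')
      simp [this]
    · simp [h]

lemma pact_mem (σ : Equiv.Perm (Fin n)) {f : RR n} (hf : f ∈ invIdeal n) : pact σ f ∈ invIdeal n := by
  have : invIdeal n ≤ (invIdeal n).comap (pact σ) := by
    conv_lhs => rw [invIdeal]
    rw [Ideal.span_le]
    intro g hg
    have h2 : pact σ g = g := hg.1 σ
    change pact σ g ∈ invIdeal n
    rw [h2]; exact Ideal.subset_span hg
  exact this hf

lemma AltL_mem {f : RR n} (hf : f ∈ invIdeal n) : AltL n f ∈ invIdeal n := by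
  rw [AltL_apply]
  exact Ideal.sum_mem _ fun σ _ => zsmul_mem (pact_mem σ hf) _

lemma psum_eval_mem (p : ℕ × ℕ) (hp : p ≠ 0) (Q : Polynomial (RR n)) :
    ∑ m : Fin n, zp m p * Q.eval (X (Sum.inl m)) ∈ invIdeal n := by
  induction Q using Polynomial.induction_on' with
  | add P Q hP hQ =>
    simp only [Polynomial.eval_add, mul_add, Finset.sum_add_distrib]
    exact Ideal.add_mem _ hP hQ
  | monomial k c =>
    have : ∑ m : Fin n, zp m p * (Polynomial.monomial k c).eval (X (Sum.inl m)) =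
        c * ∑ m : Fin n, zp m (p + (k, 0)) := by
      rw [Finset.mul_sum]
      refine Finset.sum_congr rfl fun m _ => ?_
      rw [zp_add]; simp [zp]; ring
    rw [this]
    refine Ideal.mul_mem_left _ _ (psum_mem _ ?_)
    intro h; apply hp
    rw [Prod.ext_iff] at h ⊢
    simp at h ⊢; omega

/-! Part 1 -/

lemma zmon_split (e : Fin n → ℕ × ℕ) (i : Fin n) :
    zmon e = zp i (e i) * ∏ k ∈ Finset.univ.erase i, zp k (e k) :=
  (Finset.mul_prod_erase _ _ (Finset.mem_univ i)).symm

lemma sum_sign_zero (i m : Fin n) (him : i ≠ m) (Φ : Equiv.Perm (Fin n) → RR n)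
    (h : ∀ σ, Φ (σ * Equiv.swap i m) = Φ σ) :
    ∑ σ : Equiv.Perm (Fin n), (Equiv.Perm.sign σ : ℤ) • Φ σ = 0 := by
  apply self_neg_zero
  rw [← Finset.sum_neg_distrib]
  conv_lhs => rw [← Equiv.sum_comp (Equiv.mulRight (Equiv.swap i m))]
  refine Finset.sum_congr rfl fun σ _ => ?_
  rw [Equiv.coe_mulRight, h, Equiv.Perm.sign_mul, Equiv.Perm.sign_swap him]
  simp

lemma zp_mul_AltL_zmon (q : ℕ × ℕ) (hq : q ≠ 0) (i : Fin n) (e : Fin n → ℕ × ℕ) :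
    zp i q * AltL n (zmon e) ∈ invIdeal n := by
  have key : ∀ e : Fin n → ℕ × ℕ, zp i q * zmon e + ∑ m ∈ Finset.univ.erase i,
      zp m (q + e i) * ∏ k ∈ Finset.univ.erase i, zp k (e k) ∈ invIdeal n := by
    intro e
    have h := Ideal.mul_mem_right (∏ k ∈ Finset.univ.erase i, zp k (e k)) _
      (psum_mem (n := n) (q + e i) (by
        intro h; apply hq; rw [Prod.ext_iff] at h ⊢; simp at h ⊢; omega))
    rw [← Finset.add_sum_erase _ _ (Finset.mem_univ i), add_mul, Finset.sum_mul] at h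
    rwa [zmon_split e i, ← mul_assoc, ← zp_add]
  have h2 : ∑ σ : Equiv.Perm (Fin n), (Equiv.Perm.sign σ : ℤ) • (zp i q * zmon (e ∘ σ) +
      ∑ m ∈ Finset.univ.erase i,
      zp m (q + (e ∘ σ) i) * ∏ k ∈ Finset.univ.erase i, zp k ((e ∘ σ) k)) ∈ invIdeal n :=
    Ideal.sum_mem _ fun σ _ => zsmul_mem (key _) _
  simp only [smul_add, Finset.sum_add_distrib, Finset.smul_sum] at h2
  rw [Finset.sum_comm (s := Finset.univ) (t := Finset.univ.erase i)] at h2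
  rw [Finset.sum_eq_zero (s := Finset.univ.erase i), add_zero] at h2
  · rw [AltL_zmon, Finset.mul_sum]
    simpa only [mul_smul_comm] using h2
  · intro m hm
    have hmi : m ≠ i := by simpa using hm
    refine sum_sign_zero i m hmi.symm _ fun σ => ?_
    rw [← Finset.mul_prod_erase _ _ hm, ← Finset.mul_prod_erase _ _ hm, zp_add, zp_add]
    have : ∀ k ∈ (Finset.univ.erase i).erase m, zp k ((e ∘ (σ * Equiv.swap i m)) k) =
        zp k ((e ∘ σ) k) := by
      intro k hk
      simp only [Finset.mem_erase] at hk
      simp [Equiv.swap_apply_of_ne_of_ne hk.2.1 hk.1]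
    rw [Finset.prod_congr rfl this]
    simp
    ring

lemma monomial_eq_zmon (d : Fin n ⊕ Fin n →₀ ℕ) (c : ℂ) :
    monomial d c = c • zmon (fun i => (d (Sum.inl i), d (Sum.inr i))) := by
  rw [monomial_eq, C_mul', Finsupp.prod_fintype _ _ (by simp), Fintype.prod_sum_type, zmon]
  simp only [zp, Finset.prod_mul_distrib]

lemma RR_induction {p : RR n → Prop} (h0 : ∀ e, p (zmon e)) (h1 : ∀ (c : ℂ) f, p f → p (c • f))
    (h2 : ∀ f g, p f → p g → p (f + g)) (f : RR n) : p f := by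
  induction f using MvPolynomial.induction_on' with
  | monomial u a => rw [monomial_eq_zmon]; exact h1 _ _ (h0 _)
  | add p q hp hq => exact h2 _ _ hp hq

lemma mul_AltL (r f : RR n) : r * AltL n f - C (constantCoeff r) * AltL n f ∈ invIdeal n := by
  induction r using MvPolynomial.induction_on with
  | C a => simp
  | add p q hp hq =>
    have := Ideal.add_mem _ hp hq
    convert this using 1
    simp only [map_add]; ring
  | mul_X p v hp =>
    simp only [map_mul, constantCoeff_X, mul_zero, C_0, zero_mul, sub_zero]
    rw [mul_assoc]
    refine Ideal.mul_mem_left _ _ ?_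
    clear hp
    induction f using RR_induction with
    | h0 e =>
      rcases v with i | i
      · simpa [zp] using zp_mul_AltL_zmon (1, 0) (by simp) i e
      · simpa [zp] using zp_mul_AltL_zmon (0, 1) (by simp) i e
    | h1 c f hf =>
      rw [map_smul, mul_smul_comm, ← C_mul']; exact Ideal.mul_mem_left _ _ hf
    | h2 f g hf hg =>
      rw [map_add, mul_add]; exact Ideal.add_mem _ hf hg

lemma altIdeal_eq : Submodule.restrictScalars ℂ (altIdeal n) =
    Submodule.span ℂ (Set.range fun f : RR n => Ideal.Quotient.mk (invIdeal n) (AltL n f)) := by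
  apply le_antisymm
  · intro x hx
    rw [Submodule.restrictScalars_mem, altIdeal] at hx
    induction hx using Submodule.span_induction with
    | mem x h =>
      obtain ⟨f, hf, rfl⟩ := h
      rw [eq_AltL_of_isAlt f hf]
      exact Submodule.subset_span ⟨_, rfl⟩
    | zero => exact Submodule.zero_mem _
    | add x y _ _ hx hy => exact Submodule.add_mem _ hx hy
    | smul a x _ hx =>
      obtain ⟨r, rfl⟩ := Ideal.Quotient.mk_surjective a
      rename_i hx0
      clear hx0
      induction hx using Submodule.span_induction with
      | mem x h =>
        obtain ⟨f, rfl⟩ := h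
        have := Ideal.Quotient.mk_eq_mk_iff_sub_mem _ _ |>.2 (mul_AltL r f)
        rw [smul_eq_mul]
        dsimp only
        rw [← map_mul, this, ← smul_eq_C_mul, ← map_smul]
        exact Submodule.subset_span ⟨_, rfl⟩
      | zero => rw [smul_zero]; exact Submodule.zero_mem _
      | add x y _ _ hx hy => rw [smul_add]; exact Submodule.add_mem _ hx hy
      | smul c x _ hx => rw [smul_comm]; exact Submodule.smul_mem _ _ hx
  · rw [Submodule.span_le]
    rintro _ ⟨f, rfl⟩
    exact Ideal.subset_span ⟨_, isAlt_AltL f, rfl⟩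

end AltPart

noncomputable section KoszulPart

variable {n : ℕ}

def rx (g : MvPolynomial (Fin n) ℂ) : RR n := rename Sum.inl g

def ymon (l : Fin n → ℕ) : RR n := ∏ i, X (Sum.inr i) ^ l i

/-- the term `S(i,m)` -/
def kS (l : Fin n → ℕ) (α : Fin n → ℕ) (a u : ℕ) (i m : Fin n) : RR n :=
  X (Sum.inl m) ^ u * (∏ k ∈ Finset.univ.filter (fun k => l k + 1 = a), (X (Sum.inl m) - X (Sum.inl k)))
    * zp m (α i, l i - (a - 1)) * (∏ k ∈ Finset.univ.erase i, zp k (α k, l k)) * X (Sum.inr i) ^ (a - 1)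

lemma kS_sum_mem (l α : Fin n → ℕ) (a u : ℕ) (i : Fin n) (ha : 1 ≤ a) (hi : a ≤ l i) :
    ∑ m, kS l α a u i m ∈ invIdeal n := by
  have := psum_eval_mem (n := n) (α i, l i - (a - 1)) (by simp; omega)
    (Polynomial.X ^ u * ∏ k ∈ Finset.univ.filter (fun k => l k + 1 = a),
      (Polynomial.X - Polynomial.C (X (Sum.inl k))))
  have := Ideal.mul_mem_right ((∏ k ∈ Finset.univ.erase i, zp k (α k, l k)) *
    X (Sum.inr i) ^ (a - 1)) _ this
  rw [Finset.sum_mul] at this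
  convert this using 2 with m
  simp only [kS, Polynomial.eval_mul, Polynomial.eval_pow, Polynomial.eval_X, Polynomial.eval_prod,
    Polynomial.eval_sub, Polynomial.eval_C]
  ring

lemma kS_diag (l α : Fin n → ℕ) (a u : ℕ) (i : Fin n) (ha : 1 ≤ a) (hi : a ≤ l i) :
    kS l α a u i i = X (Sum.inl i) ^ u * (∏ k ∈ Finset.univ.filter (fun k => l k + 1 = a),
      (X (Sum.inl i) - X (Sum.inl k))) * zmon (fun i => (α i, l i)) := by
  rw [kS, zmon_split _ i]
  simp only [zp]
  obtain ⟨c, hc⟩ : ∃ c, l i = c + (a - 1) := ⟨l i - (a - 1), by omega⟩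
  rw [hc, Nat.add_sub_cancel]
  ring

lemma kS_Z (l α : Fin n → ℕ) (a u : ℕ) (i m : Fin n) (h : l m + 1 = a) : kS l α a u i m = 0 := by
  rw [kS, Finset.prod_eq_zero (i := m) (by simpa using h) (by simp)]
  ring

lemma kS_swap (l α : Fin n → ℕ) (a u : ℕ) (i m : Fin n) (him : i ≠ m)
    (hi : a ≤ l i) (hm : a ≤ l m) :
    pact (Equiv.swap i m) (kS l α a u i m) = kS l α a u m i := by
  have h1 : pact (Equiv.swap i m) (∏ k ∈ Finset.univ.filter (fun k => l k + 1 = a),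
      (X (Sum.inl m) - X (Sum.inl k))) = ∏ k ∈ Finset.univ.filter (fun k => l k + 1 = a),
      (X (Sum.inl i) - X (Sum.inl k)) := by
    rw [map_prod]
    refine Finset.prod_congr rfl fun k hk => ?_
    simp only [Finset.mem_filter, Finset.mem_univ, true_and] at hk
    have k1 : k ≠ i := by rintro rfl; omega
    have k2 : k ≠ m := by rintro rfl; omega
    simp [pact, Equiv.swap_apply_of_ne_of_ne k1 k2]
  have hmi : m ∈ Finset.univ.erase i := by simp [him.symm]
  have him' : i ∈ Finset.univ.erase m := by simp [him]
  rw [kS, kS, ← Finset.mul_prod_erase _ _ hmi, ← Finset.mul_prod_erase _ _ him']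
  simp only [map_mul, h1, pact_zp, map_prod, map_pow]
  have h2 : ∏ k ∈ (Finset.univ.erase i).erase m, zp ((Equiv.swap i m) k) (α k, l k) =
      ∏ k ∈ (Finset.univ.erase m).erase i, zp k (α k, l k) := by
    rw [Finset.erase_right_comm]
    refine Finset.prod_congr rfl fun k hk => ?_
    simp only [Finset.mem_erase] at hk
    rw [Equiv.swap_apply_of_ne_of_ne hk.1 hk.2.1]
  rw [h2]
  simp only [pact, rename_X, Sum.map_inl, Sum.map_inr, Equiv.swap_apply_left, Equiv.swap_apply_right, zp]
  rcases Nat.eq_zero_or_pos a with rfl | ha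
  · simp; ring
  obtain ⟨c, hc⟩ : ∃ c, l i = c + (a - 1) := ⟨l i - (a - 1), by omega⟩
  obtain ⟨d, hd⟩ : ∃ d, l m = d + (a - 1) := ⟨l m - (a - 1), by omega⟩
  rw [hc, hd, Nat.add_sub_cancel, Nat.add_sub_cancel]
  ring

lemma kS_low (l α : Fin n → ℕ) (a u : ℕ) (i m : Fin n) (hi : a ≤ l i) (hm : l m + 2 ≤ a) :
    ∃ g : MvPolynomial (Fin n) ℂ, ∃ l' : Fin n → ℕ, ∑ k, l' k ^ 2 < ∑ k, l k ^ 2 ∧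
      kS l α a u i m = rx g * ymon l' := by
  have him : m ≠ i := by rintro rfl; omega
  refine ⟨X m ^ u * (∏ k ∈ Finset.univ.filter (fun k => l k + 1 = a), (X m - X k)) * X m ^ α i *
    ∏ k ∈ Finset.univ.erase i, X k ^ α k,
    Function.update (Function.update l m (l i - (a - 1) + l m)) i (a - 1), ?_, ?_⟩
  · have hmi : m ∈ Finset.univ.erase i := by simp [him]
    rw [← Finset.add_sum_erase _ _ (Finset.mem_univ i), ← Finset.add_sum_erase _ _ hmi,
      ← Finset.add_sum_erase _ (fun k => l k ^ 2) (Finset.mem_univ i),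
      ← Finset.add_sum_erase _ (fun k => l k ^ 2) hmi]
    have : ∀ k ∈ (Finset.univ.erase i).erase m, (Function.update
        (Function.update l m (l i - (a - 1) + l m)) i (a - 1)) k ^ 2 = l k ^ 2 := by
      intro k hk
      simp only [Finset.mem_erase] at hk
      simp [hk.1, hk.2.1]
    rw [Finset.sum_congr rfl this]
    simp only [Function.update_self, Function.update_of_ne him]
    obtain ⟨t, ht⟩ : ∃ t, a = l m + 2 + t := ⟨a - (l m + 2), by omega⟩
    obtain ⟨s, hs⟩ : ∃ s, l i = a + s := ⟨l i - a, by omega⟩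
    have e1 : a - 1 = l m + 1 + t := by omega
    have e2 : l i - (a - 1) = s + 1 := by omega
    have e3 : l i = l m + 2 + t + s := by omega
    rw [e2, e1, e3]
    nlinarith [Nat.zero_le (s * t), Nat.zero_le s, Nat.zero_le t]
  · simp only [kS, rx, ymon, map_mul, map_pow, map_prod, rename_X, map_sub, zp,
      Finset.prod_mul_distrib]
    rw [← Finset.mul_prod_erase _ (fun k => X (Sum.inr k) ^ (Function.update
        (Function.update l m (l i - (a - 1) + l m)) i (a - 1)) k) (Finset.mem_univ i)]
    have : ∏ k ∈ Finset.univ.erase i, (X (Sum.inr k) : RR n) ^ (Function.update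
        (Function.update l m (l i - (a - 1) + l m)) i (a - 1)) k = X (Sum.inr m) ^ (l i - (a - 1)) *
        ∏ k ∈ Finset.univ.erase i, X (Sum.inr k) ^ l k := by
      have hmi : m ∈ Finset.univ.erase i := by simp [him]
      rw [← Finset.mul_prod_erase _ _ hmi, ← Finset.mul_prod_erase _ (fun k => X (Sum.inr k) ^ l k) hmi,
        ← mul_assoc, ← pow_add]
      congr 1
      · simp [him]
      · refine Finset.prod_congr rfl fun k hk => ?_
        simp only [Finset.mem_erase] at hk
        simp [hk.1, hk.2.1]
    rw [this]
    simp only [Function.update_self]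
    ring

lemma koszul_mono (T : Submodule ℂ (RR n)) (hI : ∀ f ∈ invIdeal n, f ∈ T) (l α : Fin n → ℕ)
    (ih : ∀ l' : Fin n → ℕ, ∑ k, l' k ^ 2 < ∑ k, l k ^ 2 → ∀ g, AltL n (rx g * ymon l') ∈ T)
    (a u : ℕ) (ha : 1 ≤ a) :
    AltL n (rx (dcRho l Finset.univ a u) * zmon (fun i => (α i, l i))) ∈ T := by
  set Y := Finset.univ.filter (fun i => a ≤ l i) with hY
  have h1 : rx (dcRho l Finset.univ a u) * zmon (fun i => (α i, l i)) =
      ∑ i ∈ Y, kS l α a u i i := by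
    rw [rx, dcRho, map_sum, Finset.sum_mul]
    refine Finset.sum_congr rfl fun i hi => ?_
    rw [kS_diag l α a u i ha (by simpa [hY] using hi)]
    simp
  have h2 : ∑ i ∈ Y, kS l α a u i i = ∑ i ∈ Y, ∑ m, kS l α a u i m
      - ∑ i ∈ Y, ∑ m ∈ Finset.univ.erase i, kS l α a u i m := by
    rw [← Finset.sum_sub_distrib]
    refine Finset.sum_congr rfl fun i hi => ?_
    rw [← Finset.add_sum_erase _ _ (Finset.mem_univ i), add_sub_cancel_right]
  rw [h1, h2, map_sub]
  refine T.sub_mem (hI _ (AltL_mem (Ideal.sum_mem _ fun i hi => kS_sum_mem l α a u i ha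
    (by simpa [hY] using hi)))) ?_
  have h3 : ∑ i ∈ Y, ∑ m ∈ Finset.univ.erase i, kS l α a u i m =
      ∑ i ∈ Y, ∑ m ∈ Y, (if m ≠ i then kS l α a u i m else 0) +
      ∑ i ∈ Y, ∑ m ∈ Finset.univ.filter (fun i => ¬ a ≤ l i), kS l α a u i m := by
    rw [← Finset.sum_add_distrib]
    refine Finset.sum_congr rfl fun i hi => ?_
    have hi' : a ≤ l i := by simpa [hY] using hi
    have : ∑ m ∈ Finset.univ.filter (fun i => ¬ a ≤ l i), kS l α a u i m =
      ∑ m ∈ Finset.univ.filter (fun i => ¬ a ≤ l i), if m ≠ i then kS l α a u i m else 0 := by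
      refine Finset.sum_congr rfl fun m hm => ?_
      rw [if_pos]; rintro rfl; simp at hm; omega
    rw [this, hY, Finset.sum_filter_add_sum_filter_not, ← Finset.sum_filter]
    congr 1
    ext m; simp
  rw [h3, map_add]
  refine T.add_mem ?_ ?_
  · have : AltL n (∑ i ∈ Y, ∑ m ∈ Y, (if m ≠ i then kS l α a u i m else 0)) = 0 := by
      apply self_neg_zero
      conv_lhs => rw [Finset.sum_comm]
      simp only [map_sum]
      rw [← Finset.sum_neg_distrib]
      refine Finset.sum_congr rfl fun m hm => ?_
      rw [← Finset.sum_neg_distrib]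
      refine Finset.sum_congr rfl fun i hi => ?_
      have hi' : a ≤ l i := by simpa [hY] using hi
      have hm' : a ≤ l m := by simpa [hY] using hm
      by_cases h : m = i
      · simp [h]
      · rw [if_pos h, if_pos (Ne.symm h), ← kS_swap l α a u m i h hm' hi', AltL_swap _ _ h]
    rw [this]; exact T.zero_mem
  · simp only [map_sum]
    refine T.sum_mem fun i hi => T.sum_mem fun m hm => ?_
    have hi' : a ≤ l i := by simpa [hY] using hi
    have hm' : l m < a := by simpa using hm
    by_cases h : l m + 1 = a
    · rw [kS_Z l α a u i m h, map_zero]; exact T.zero_mem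
    · obtain ⟨g, l', hl', he⟩ := kS_low l α a u i m hi' (by omega)
      rw [he]; exact ih l' hl' g

lemma rx_monomial_ymon (d : Fin n →₀ ℕ) (c : ℂ) (l : Fin n → ℕ) :
    rx (monomial d c) * ymon l = c • zmon (fun i => (d i, l i)) := by
  rw [monomial_eq, C_mul', Finsupp.prod_fintype _ _ (by simp), zmon, rx, ymon]
  simp only [zp, Finset.prod_mul_distrib, map_smul, map_prod, map_pow, rename_X, smul_mul_assoc]

lemma koszul (T : Submodule ℂ (RR n)) (hI : ∀ f ∈ invIdeal n, f ∈ T) (l : Fin n → ℕ)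
    (ih : ∀ l' : Fin n → ℕ, ∑ k, l' k ^ 2 < ∑ k, l k ^ 2 → ∀ g, AltL n (rx g * ymon l') ∈ T)
    (a u : ℕ) (ha : a < 1 → 1 ≤ u) (q : MvPolynomial (Fin n) ℂ) :
    AltL n (rx (q * dcRho l Finset.univ a u) * ymon l) ∈ T := by
  rcases Nat.eq_zero_or_pos a with rfl | hpos
  · apply hI
    apply AltL_mem
    have : rx (dcRho l Finset.univ 0 u) = ∑ m : Fin n, zp m (u, 0) := by
      simp [rx, dcRho, zp]
    have h2 := psum_mem (n := n) (u, 0) (by simp; omega)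
    rw [rx, map_mul, ← rx, ← rx, this]
    exact Ideal.mul_mem_right _ _ (Ideal.mul_mem_left _ _ h2)
  · induction q using MvPolynomial.induction_on' with
    | monomial d c =>
      have : rx (monomial d c * dcRho l Finset.univ a u) * ymon l =
          c • (rx (dcRho l Finset.univ a u) * zmon (fun i => (d i, l i))) := by
        rw [rx, map_mul, ← rx, ← rx, mul_right_comm, rx_monomial_ymon, smul_mul_assoc, mul_comm]
      rw [this, map_smul]
      exact T.smul_mem _ (koszul_mono T hI l d ih a u hpos)
    | add p q hp hq =>
      rw [add_mul, rx, map_add, add_mul, map_add]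
      exact T.add_mem hp hq

end KoszulPart

section CombPart

def cPairs : List ℕ → List (ℕ × ℕ)
  | [] => []
  | b :: w => (w.countP (fun c => c = b ∨ c + 1 = b), b) :: cPairs w

def cGood : ℕ → List ℕ → Prop
  | _, [] => True
  | H, b :: w => b < H ∧ cGood (b + 2) w

lemma cPairs_snd (w : List ℕ) : (cPairs w).map Prod.snd = w := by
  induction w with
  | nil => rfl
  | cons b w ih => simp [cPairs, ih]

lemma cGood_mono {H H' : ℕ} (h : H ≤ H') {w : List ℕ} (hw : cGood H w) : cGood H' w := by
  cases w with
  | nil => trivial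
  | cons b w => exact ⟨lt_of_lt_of_le hw.1 h, hw.2⟩

def cBnd (H : ℕ) (S : Finset (ℕ × ℕ)) : Prop :=
  ∀ p ∈ S, p.1 + 1 < (S.filter (fun q => q.2 = p.2)).card +
    (S.filter (fun q => q.2 + 1 = p.2)).card + (if p.2 < H then 1 else 0)

lemma comb_zero (S : Finset (ℕ × ℕ)) (h : cBnd 0 S) : S = ∅ := by
  by_contra hne
  obtain ⟨p, hp, hmin⟩ := Finset.exists_min_image S Prod.snd (Finset.nonempty_iff_ne_empty.2 hne)
  have h0 : S.filter (fun q => q.2 + 1 = p.2) = ∅ := by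
    rw [Finset.filter_eq_empty_iff]
    intro q hq; have := hmin q hq; omega
  have hc : (S.filter (fun q => q.2 = p.2)).card ≤
      (Finset.range ((S.filter (fun q => q.2 = p.2)).card - 1)).card := by
    apply Finset.card_le_card_of_injOn Prod.fst
    · intro q hq
      simp only [Finset.coe_filter, Set.mem_ofPred_eq] at hq
      have := h q hq.1
      rw [hq.2, h0] at this
      simp at this ⊢; omega
    · intro q hq r hr hqr
      simp only [Finset.coe_filter, Set.mem_ofPred_eq] at hq hr
      exact Prod.ext hqr (hq.2.trans hr.2.symm)
  rw [Finset.card_range] at hc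
  have : 0 < (S.filter (fun q => q.2 = p.2)).card := Finset.card_pos.2 ⟨p, by simp [hp]⟩
  omega

theorem comb_main (c : ℕ) : ∀ (H : ℕ) (S : Finset (ℕ × ℕ)), S.card = c → cBnd H S →
    ∃ w, cGood H w ∧ (cPairs w : Multiset (ℕ × ℕ)) = S.val := by
  induction c using Nat.strong_induction_on with
  | _ c IH =>
  intro H
  induction H with
  | zero =>
    intro S _ h
    rw [comb_zero S h]
    exact ⟨[], trivial, rfl⟩
  | succ H ihH =>
    intro S hS h
    by_cases hp : ((S.filter (fun q => q.2 = H)).card + (S.filter (fun q => q.2 + 1 = H)).card - 1, H) ∈ S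
    · set p0 := ((S.filter (fun q => q.2 = H)).card + (S.filter (fun q => q.2 + 1 = H)).card - 1, H) with hp0
      have hpos : 0 < (S.filter (fun q => q.2 = H)).card := Finset.card_pos.2 ⟨p0, by simp [hp]; simp [hp0]⟩
      obtain ⟨w, hw, hwS⟩ := IH (S.erase p0).card (by rw [← hS]; exact Finset.card_erase_lt_of_mem hp)
        (H+2) (S.erase p0) rfl (by
          intro p hpS
          obtain ⟨hne, hpS⟩ := Finset.mem_erase.1 hpS
          have hb := h p hpS
          have c1 := dc_card_erase S p0 hp (fun q => q.2 = p.2)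
          have c2 := dc_card_erase S p0 hp (fun q => q.2 + 1 = p.2)
          have e2 : p0.2 = H := rfl
          rw [e2] at c1 c2
          by_cases hpH : p.2 = H
          · have : p.1 ≠ p0.1 := fun h' => hne (Prod.ext h' hpH)
            have e1 : p0.1 = (S.filter (fun q => q.2 = H)).card +
              (S.filter (fun q => q.2 + 1 = H)).card - 1 := rfl
            rw [hpH] at c1 c2 hb ⊢
            split_ifs at c1 c2 hb ⊢ <;> omega
          · split_ifs at c1 c2 hb ⊢ <;> omega)
      refine ⟨H :: w, ⟨by omega, hw⟩, ?_⟩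
      have hcount : w.countP (fun c => c = H ∨ c + 1 = H) = p0.1 := by
        have : w.countP (fun c => c = H ∨ c + 1 = H) =
            Multiset.countP (fun p : ℕ × ℕ => p.2 = H ∨ p.2 + 1 = H) (S.erase p0).val := by
          rw [← hwS, Multiset.coe_countP]
          conv_lhs => rw [← cPairs_snd w, List.countP_map]
          rfl
        rw [this, Multiset.countP_eq_card_filter, ← Finset.filter_val, Finset.card_val]
        have c3 := dc_card_erase S p0 hp (fun q => q.2 = H ∨ q.2 + 1 = H)
        have c4 : (S.filter (fun q => q.2 = H ∨ q.2 + 1 = H)).card = (S.filter (fun q => q.2 = H)).card +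
          (S.filter (fun q => q.2 + 1 = H)).card := by
          rw [Finset.filter_or, Finset.card_union_of_disjoint]
          rw [Finset.disjoint_filter]; intro q _ h1 h2; omega
        rw [if_pos (Or.inl rfl)] at c3
        have e1 : p0.1 = (S.filter (fun q => q.2 = H)).card +
              (S.filter (fun q => q.2 + 1 = H)).card - 1 := rfl
        omega
      rw [cPairs, hcount, ← Multiset.cons_coe, hwS, show (p0.1, H) = p0 from rfl,
        ← Finset.insert_val_of_notMem (by simp), Finset.insert_erase hp]
    · obtain ⟨w, hw, hwS⟩ := ihH S hS (by
        intro p hpS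
        have hb := h p hpS
        by_cases hpH : p.2 = H
        · have : p.1 ≠ (S.filter (fun q => q.2 = H)).card +
              (S.filter (fun q => q.2 + 1 = H)).card - 1 := by
            intro h'; apply hp; rw [← h', ← hpH]; exact hpS
          have hpos : 0 < (S.filter (fun q => q.2 = H)).card :=
            Finset.card_pos.2 ⟨p, by simp [hpS, hpH]⟩
          rw [hpH] at hb ⊢
          split_ifs at hb ⊢ <;> omega
        · split_ifs at hb ⊢ <;> omega)
      exact ⟨w, cGood_mono (by omega) hw, hwS⟩

lemma countP_ofFn' {n : ℕ} (a : Fin n → ℕ) (p : ℕ → Prop) [DecidablePred p] :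
    (List.ofFn a).countP (fun c => p c) = (Finset.univ.filter (fun j => p (a j))).card := by
  induction n with
  | zero => simp
  | succ n ih =>
    rw [List.ofFn_succ, List.countP_cons, ih, Fin.card_filter_univ_succ]
    by_cases h : p (a 0) <;> simp [h]

lemma cPairs_ofFn {n : ℕ} (a : Fin n → ℕ) :
    cPairs (List.ofFn a) = List.ofFn (fun i => (dinvSeq a i, a i)) := by
  induction n with
  | zero => simp [cPairs]
  | succ n ih =>
    rw [List.ofFn_succ, List.ofFn_succ, cPairs, ih]
    congr 2
    · rw [countP_ofFn' _ (fun c => c = a 0 ∨ c + 1 = a 0), dinvSeq, Fin.card_filter_univ_succ]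
      simp [Fin.succ_pos]
    · funext i
      rw [dinvSeq, dinvSeq, Fin.card_filter_univ_succ]
      simp

lemma cGood_ofFn {n : ℕ} (H : ℕ) (a : Fin n → ℕ) (h : cGood H (List.ofFn a)) :
    (∀ i : Fin n, (i : ℕ) = 0 → a i < H) ∧ ∀ i j : Fin n, (j : ℕ) = i + 1 → a j ≤ a i + 1 := by
  induction n generalizing H with
  | zero => exact ⟨fun i => i.elim0, fun i => i.elim0⟩
  | succ n ih =>
    rw [List.ofFn_succ] at h
    obtain ⟨h1, h2⟩ := h
    have := ih _ _ h2
    constructor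
    · intro i hi; rw [show i = 0 from Fin.ext hi]; exact h1
    · intro i j hij
      obtain ⟨j, rfl⟩ := Fin.eq_succ_of_ne_zero (i := j) (by rintro rfl; simp at hij)
      cases i using Fin.cases with
      | zero =>
        have := this.1 j (by simpa using hij); omega
      | succ i => exact this.2 i j (by simpa using hij)

theorem comb_final {n : ℕ} (e : Fin n → ℕ × ℕ) (he : Function.Injective e)
    (hb : ∀ i, (e i).1 + 1 < (Finset.univ.filter (fun k => (e k).2 = (e i).2)).card +
      (Finset.univ.filter (fun k => (e k).2 + 1 = (e i).2)).card + (if (e i).2 < 1 then 1 else 0)) :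
    ∃ a : Fin n → ℕ, IsDyckArea a ∧ ∃ σ : Equiv.Perm (Fin n),
      (fun i => (dinvSeq a i, a i)) = e ∘ σ := by
  have hcard : ∀ p : ℕ × ℕ → Prop, ∀ [DecidablePred p],
      ((Finset.univ.image e).filter p).card = (Finset.univ.filter (fun k => p (e k))).card := by
    intro p _
    rw [Finset.filter_image, Finset.card_image_of_injective _ he]
  obtain ⟨w, hw, hwS⟩ := comb_main _ 1 (Finset.univ.image e) rfl (by
    intro p hp
    obtain ⟨i, -, rfl⟩ := Finset.mem_image.1 hp
    rw [hcard, hcard]; exact hb i)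
  have hlen : w.length = n := by
    have := congrArg Multiset.card hwS
    rw [Multiset.coe_card, Finset.card_val, Finset.card_image_of_injective _ he] at this
    rw [← cPairs_snd w, List.length_map, this]; simp
  obtain ⟨a, ha⟩ : ∃ a : Fin n → ℕ, w = List.ofFn a := by
    subst hlen; exact ⟨w.get, by simp⟩
  rw [ha, cPairs_ofFn] at hwS
  rw [ha] at hw
  have hg := cGood_ofFn 1 a hw
  refine ⟨a, ⟨fun i hi => by have := hg.1 i hi; omega, hg.2⟩, ?_⟩
  set E : Fin n → ℕ × ℕ := fun i => (dinvSeq a i, a i) with hE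
  have hinj : Function.Injective E := by
    rw [← List.nodup_ofFn, ← Multiset.coe_nodup, hwS]; exact Finset.nodup _
  have hex : ∀ i, ∃ j, e j = E i := by
    intro i
    have : E i ∈ (Finset.univ.image e).val := by rw [← hwS]; simp
    simpa using this
  choose s hs using hex
  have hsinj : Function.Injective s := fun i j hij => hinj (by rw [← hs, ← hs, hij])
  refine ⟨Equiv.ofBijective s (Finite.injective_iff_bijective.1 hsinj), ?_⟩
  funext i; simp [hs]

end CombPart

noncomputable section SpanPart

variable {n : ℕ}

def dyE (a : Fin n → ℕ) : Fin n → ℕ × ℕ := fun i => (dinvSeq a i, a i)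

def TT (n : ℕ) : Submodule ℂ (RR n) := (invIdeal n).restrictScalars ℂ ⊔
  Submodule.span ℂ (Set.range fun π : {a : Fin n → ℕ // IsDyckArea a} => AltL n (zmon (dyE π.1)))

lemma TT_main (N : ℕ) : ∀ l : Fin n → ℕ, ∑ k, l k ^ 2 = N → ∀ g, AltL n (rx g * ymon l) ∈ TT n := by
  induction N using Nat.strong_induction_on with
  | _ N IH =>
  intro l hl g
  have ih : ∀ l' : Fin n → ℕ, ∑ k, l' k ^ 2 < ∑ k, l k ^ 2 → ∀ g, AltL n (rx g * ymon l') ∈ TT n :=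
    fun l' h' => IH _ (hl ▸ h') l' rfl
  have hI : ∀ f ∈ invIdeal n, f ∈ TT n := fun f hf => Submodule.mem_sup_left hf
  let φ : MvPolynomial (Fin n) ℂ →ₗ[ℂ] RR n :=
    (AltL n) ∘ₗ (LinearMap.mulRight ℂ (ymon l)) ∘ₗ (rename Sum.inl).toLinearMap
  have hφ : ∀ g, φ g = AltL n (rx g * ymon l) := fun g => rfl
  suffices h : dcV l 1 Finset.univ ≤ (TT n).comap φ by
    rw [dc_main l _ 1 Finset.univ rfl] at h
    exact h (Submodule.mem_top (x := g))
  refine dcV_le _ ?_ ?_ ?_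
  · intro α hα
    rw [Submodule.mem_comap, hφ, rx_monomial_ymon, one_smul]
    by_cases hinj : Function.Injective (fun i => (α i, l i))
    · obtain ⟨a, ha, σ, hσ⟩ := comb_final _ hinj (fun i => hα i (Finset.mem_univ i))
      have h1 := AltL_zmon_perm (fun i => (α i, l i)) σ
      rw [← hσ] at h1
      have h2 : AltL n (zmon fun i => (α i, l i)) =
          (Equiv.Perm.sign σ : ℤ) • AltL n (zmon (dyE a)) := by
        rw [show dyE a = fun i => (dinvSeq a i, a i) from rfl, h1, smul_smul, sgn_sq, one_smul]
      rw [h2]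
      have h3 : AltL n (zmon (dyE a)) ∈ TT n :=
        Submodule.mem_sup_right (Submodule.subset_span ⟨⟨a, ha⟩, rfl⟩)
      exact zsmul_mem h3 _
    · rw [Function.Injective] at hinj
      push Not at hinj
      obtain ⟨i, j, h1, h2⟩ := hinj
      rw [AltL_zmon_eq_zero _ i j h2 h1]; exact Submodule.zero_mem _
  · intro q a u h
    rw [Submodule.mem_comap, hφ]
    exact koszul (TT n) hI l ih a u h q
  · intro f i _ j _ hij hlij hf
    rw [Submodule.mem_comap, hφ]
    rw [AltL_eq_zero i j hij]; exact Submodule.zero_mem _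
    rw [map_mul]
    congr 1
    · conv_rhs => rw [← hf]
      rw [rx, rx, pact, rename_rename, rename_rename]; rfl
    · rw [ymon, map_prod]
      simp only [pact, map_pow, rename_X, Sum.map_inr]
      refine Fintype.prod_equiv (Equiv.swap i j) _ _ fun k => ?_
      congr 1
      simp only [Equiv.swap_apply_def]; split_ifs <;> simp_all

lemma AltL_mem_TT (f : RR n) : AltL n f ∈ TT n := by
  induction f using RR_induction with
  | h0 e =>
    have := TT_main _ (fun i => (e i).2) rfl (monomial (Finsupp.equivFunOnFinite.symm fun i => (e i).1) 1)
    rwa [rx_monomial_ymon, one_smul] at this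
  | h1 c f hf => rw [map_smul]; exact Submodule.smul_mem _ _ hf
  | h2 f g hf hg => rw [map_add]; exact Submodule.add_mem _ hf hg

lemma span_main : Submodule.span ℂ (Set.range (fun π : {a : Fin n → ℕ // IsDyckArea a} =>
      Ideal.Quotient.mk (invIdeal n)
        (biVandermonde n (fun i => (dinvSeq π.1 i, π.1 i))))) =
      Submodule.restrictScalars ℂ (altIdeal n) := by
  rw [altIdeal_eq]
  apply le_antisymm
  · rw [Submodule.span_le]
    rintro _ ⟨π, rfl⟩
    dsimp only
    rw [biVandermonde_eq]
    exact Submodule.subset_span ⟨_, rfl⟩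
  · rw [Submodule.span_le]
    rintro _ ⟨f, rfl⟩
    dsimp only
    obtain ⟨g, hg, h, hh, hgh⟩ := Submodule.mem_sup.1 (AltL_mem_TT f)
    rw [← hgh, map_add, Ideal.Quotient.eq_zero_iff_mem.2 hg, zero_add]
    have := Submodule.mem_map_of_mem (f := (Ideal.Quotient.mkₐ ℂ (invIdeal n)).toLinearMap) hh
    rw [Submodule.map_span, ← Set.range_comp] at this
    have h2 : (fun π : {a : Fin n → ℕ // IsDyckArea a} => Ideal.Quotient.mk (invIdeal n)
        (biVandermonde n (fun i => (dinvSeq π.1 i, π.1 i)))) =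
        ((Ideal.Quotient.mkₐ ℂ (invIdeal n)).toLinearMap ∘ fun π => AltL n (zmon (dyE π.1))) := by
      funext π
      rw [biVandermonde_eq]; rfl
    rw [h2]
    exact this

end SpanPart

noncomputable section IndepPart

variable {n : ℕ}

def vv (n m : ℕ) : MvPolynomial ℕ ℂ := if m < n then X m else 0

def evx (u : Fin n → ℕ) : RR n →ₐ[ℂ] MvPolynomial (Fin n) ℂ :=
  aeval (Sum.elim (fun i => C (u i : ℂ)) X)

def LL (u : Fin n → ℕ) : MvPolynomial (Fin n) ℂ →ₗ[ℂ] MvPolynomial ℕ ℂ :=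
  (basisMonomials (Fin n) ℂ).constr ℂ (fun d => ∏ i, vv n (u i + d i))

lemma LL_monomial (u : Fin n → ℕ) (d) : LL u (monomial d 1) = ∏ i, vv n (u i + d i) := by
  have := (basisMonomials (Fin n) ℂ).constr_basis ℂ (fun d => ∏ i, vv n (u i + d i)) d
  rwa [coe_basisMonomials] at this

def pr (u : Fin n → ℕ) : RR n →ₗ[ℂ] MvPolynomial ℕ ℂ := LL u ∘ₗ (evx u).toLinearMap

lemma pr_apply (u : Fin n → ℕ) (f : RR n) : pr u f = LL u (evx u f) := rfl

def Th (n : ℕ) : RR n →ₗ[ℂ] MvPolynomial ℕ ℂ := pr (fun i => (i : ℕ))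

lemma Rx_induction {p : MvPolynomial (Fin n) ℂ → Prop} (h0 : ∀ d, p (monomial d 1))
    (h1 : ∀ (c : ℂ) f, p f → p (c • f))
    (h2 : ∀ f g, p f → p g → p (f + g)) (f) : p f := by
  induction f using MvPolynomial.induction_on' with
  | monomial u a =>
    have := h1 a _ (h0 u)
    rwa [smul_monomial, smul_eq_mul, mul_one] at this
  | add p q hp hq => exact h2 _ _ hp hq

lemma LL_rename (u : Fin n → ℕ) (σ : Equiv.Perm (Fin n)) (g) :
    LL u (rename σ g) = LL (u ∘ σ) g := by
  induction g using Rx_induction with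
  | h0 d =>
    rw [rename_monomial, LL_monomial, LL_monomial, ← Equiv.prod_comp σ]
    refine Finset.prod_congr rfl fun i _ => ?_
    rw [Finsupp.mapDomain_equiv_apply]; simp
  | h1 c f hf => simp only [map_smul, hf]
  | h2 f g hf hg => simp only [map_add, hf, hg]

lemma evx_pact (u : Fin n → ℕ) (σ : Equiv.Perm (Fin n)) (f : RR n) :
    evx u (pact σ f) = rename σ (evx (u ∘ σ) f) := by
  have : (evx u).comp (pact σ) = (rename σ).comp (evx (u ∘ σ)) := by
    apply algHom_ext
    rintro (i | i) <;> simp [evx, pact]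
  exact DFunLike.congr_fun this f

lemma pr_pact (u : Fin n → ℕ) (σ : Equiv.Perm (Fin n)) (f : RR n) :
    pr u (pact σ f) = pr (u ∘ σ) f := by
  rw [pr_apply, evx_pact, LL_rename, pr_apply]

def shf (δ : Fin n → ℕ) : RR n →ₐ[ℂ] RR n :=
  aeval (Sum.elim (fun i => X (Sum.inl i) + C (δ i : ℂ)) (fun i => X (Sum.inr i)))

lemma evx_shf (u δ : Fin n → ℕ) (f : RR n) : evx u (shf δ f) = evx (u + δ) f := by
  have : (evx u).comp (shf δ) = evx (u + δ) := by
    apply algHom_ext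
    rintro (i | i) <;> simp [evx, shf]
  exact DFunLike.congr_fun this f

lemma LL_ymul (u δ : Fin n → ℕ) (g) : LL u ((∏ i, X i ^ δ i) * g) = LL (u + δ) g := by
  have hm : (∏ i, X i ^ δ i : MvPolynomial (Fin n) ℂ) =
      monomial (Finsupp.equivFunOnFinite.symm δ) 1 := by
    rw [monomial_eq, C_1, one_mul, Finsupp.prod_fintype _ _ (by simp)]; rfl
  induction g using Rx_induction with
  | h0 d =>
    rw [hm, monomial_mul, one_mul, LL_monomial, LL_monomial]
    refine Finset.prod_congr rfl fun i _ => ?_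
    simp [add_assoc]
  | h1 c f hf => simp only [map_smul, hf, mul_smul_comm]
  | h2 f g hf hg => simp only [map_add, hf, hg, mul_add]

lemma evx_zmon (u : Fin n → ℕ) (e) : evx u (zmon e) =
    (∏ i, (u i : ℂ) ^ (e i).1) • ∏ i, X i ^ (e i).2 := by
  simp only [zmon, zp, map_prod, map_mul, map_pow, evx, aeval_X, Sum.elim_inl, Sum.elim_inr,
    Finset.prod_mul_distrib]
  rw [smul_eq_C_mul, map_prod]
  simp only [map_pow]

lemma pr_zmon_shf (u : Fin n → ℕ) (e) (f : RR n) :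
    pr u (zmon e * shf (fun i => (e i).2) f) =
      (∏ i, (u i : ℂ) ^ (e i).1) • pr (u + fun i => (e i).2) f := by
  rw [pr_apply, map_mul, evx_shf, evx_zmon, smul_mul_assoc, map_smul, LL_ymul, pr_apply]

lemma LL_zero (u : Fin n → ℕ) (i : Fin n) (hi : n ≤ u i) : LL u = 0 := by
  refine LinearMap.ext fun g => ?_
  induction g using Rx_induction with
  | h0 d =>
    rw [LL_monomial, Finset.prod_eq_zero (Finset.mem_univ i)]
    · rfl
    · rw [vv, if_neg (by omega)]
  | h1 c f hf => simp only [map_smul, hf]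
  | h2 f g hf hg => simp only [map_add, hf, hg]

lemma pr_alt_rep (u : Fin n → ℕ) (i j : Fin n) (hij : i ≠ j) (h : u i = u j) (f : RR n) :
    pr u (AltL n f) = 0 := by
  have h1 := pr_pact u (Equiv.swap i j) (AltL n f)
  have h2 : u ∘ (Equiv.swap i j) = u := by
    funext k
    simp only [Function.comp, Equiv.swap_apply_def]; split_ifs <;> simp_all
  rw [pact_AltL, Equiv.Perm.sign_swap hij, h2] at h1
  simp only [Units.val_neg, Units.val_one, neg_smul, one_smul, map_neg] at h1
  exact self_eq_neg.1 h1.symm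

lemma pr_alt_shift (σ : Equiv.Perm (Fin n)) (δ : Fin n → ℕ) (hδ : δ ≠ 0) (f : RR n) :
    pr ((fun i => ((σ i : Fin n) : ℕ)) + δ) (AltL n f) = 0 := by
  set u := (fun i => ((σ i : Fin n) : ℕ)) + δ with hu
  by_cases h1 : ∃ i, n ≤ u i
  · obtain ⟨i, hi⟩ := h1
    rw [pr_apply, LL_zero u i hi]; rfl
  push Not at h1
  by_cases h2 : Function.Injective u
  · exfalso
    let s : Fin n → Fin n := fun i => ⟨u i, h1 i⟩
    have hs : Function.Injective s := fun i j hij => h2 (by simpa [s] using hij)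
    have e1 : ∑ i, u i = ∑ i : Fin n, (i : ℕ) := by
      have := Equiv.sum_comp (Equiv.ofBijective s (Finite.injective_iff_bijective.1 hs))
        (fun i : Fin n => (i : ℕ))
      rw [← this]; rfl
    have e2 : ∑ i, u i = ∑ i : Fin n, (i : ℕ) + ∑ i, δ i := by
      rw [← Equiv.sum_comp σ (fun i : Fin n => (i : ℕ)), ← Finset.sum_add_distrib]; rfl
    have e3 : ∑ i, δ i = 0 := by omega
    apply hδ
    funext i
    exact (Finset.sum_eq_zero_iff.1 e3) i (Finset.mem_univ i)
  · rw [Function.Injective] at h2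
    push Not at h2
    obtain ⟨i, j, h3, h4⟩ := h2
    exact pr_alt_rep u i j h4 h3 f

lemma Th_AltL (f : RR n) : Th n (AltL n f) = ∑ σ : Equiv.Perm (Fin n),
    (Equiv.Perm.sign σ : ℤ) • pr (fun i => ((σ i : Fin n) : ℕ)) f := by
  rw [AltL_apply, map_sum]
  refine Finset.sum_congr rfl fun σ _ => ?_
  rw [map_zsmul, Th, pr_pact]; rfl

/-- main part vanishes or is a multiple of `Th ω` -/
lemma Th_main_part (e : Fin n → ℕ × ℕ) (f : RR n) :
    Th n (AltL n (zmon e * shf (fun i => (e i).2) (AltL n f))) ∈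
      Submodule.span ℂ (if (fun i => (e i).2) = (0 : Fin n → ℕ) then {Th n (AltL n f)} else ∅) := by
  rw [Th_AltL (zmon e * _)]
  refine Submodule.sum_mem _ fun σ _ => ?_
  refine Submodule.smul_of_tower_mem _ _ ?_
  rw [pr_zmon_shf]
  refine Submodule.smul_mem _ _ ?_
  split_ifs with h
  · rw [h, add_zero]
    have h2 : pr (fun i => ((σ i : Fin n) : ℕ)) (AltL n f) =
        (Equiv.Perm.sign σ : ℤ) • Th n (AltL n f) := by
      rw [← map_zsmul, ← pact_AltL, Th, pr_pact]; rfl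
    rw [h2]
    exact Submodule.smul_of_tower_mem _ _ (Submodule.subset_span rfl)
  · rw [pr_alt_shift σ _ h]; exact Submodule.zero_mem _

/-! degree filtration -/

def xdg (e : Fin n → ℕ × ℕ) : ℕ := ∑ i, (e i).1

def XLT (n d : ℕ) : Submodule ℂ (RR n) := Submodule.span ℂ {f | ∃ e, xdg e < d ∧ f = zmon e}

lemma zmon_mul (e e' : Fin n → ℕ × ℕ) : zmon e * zmon e' = zmon (e + e') := by
  simp only [zmon, ← Finset.prod_mul_distrib, Pi.add_apply, zp_add]

lemma xdg_add (e e' : Fin n → ℕ × ℕ) : xdg (e + e') = xdg e + xdg e' := by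
  simp [xdg, Finset.sum_add_distrib]

lemma zmon_mul_XLT (e : Fin n → ℕ × ℕ) (d : ℕ) {f : RR n} (hf : f ∈ XLT n d) :
    zmon e * f ∈ XLT n (xdg e + d) := by
  induction hf using Submodule.span_induction with
  | mem x h =>
    obtain ⟨e', he', rfl⟩ := h
    rw [zmon_mul]
    exact Submodule.subset_span ⟨_, by rw [xdg_add]; omega, rfl⟩
  | zero => simp
  | add x y _ _ hx hy => rw [mul_add]; exact Submodule.add_mem _ hx hy
  | smul c x _ hx => rw [mul_smul_comm]; exact Submodule.smul_mem _ _ hx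

lemma XLT_mono {d d' : ℕ} (h : d ≤ d') : XLT n d ≤ XLT n d' := by
  apply Submodule.span_mono
  rintro f ⟨e, he, rfl⟩
  exact ⟨e, lt_of_lt_of_le he h, rfl⟩

lemma zmon_single (i : Fin n) : zmon (Pi.single i (1, 0)) = (X (Sum.inl i) : RR n) := by
  rw [zmon, Finset.prod_eq_single i]
  · simp [zp]
  · intro j _ hj; simp [zp, Pi.single_eq_of_ne hj]
  · simp

lemma xdg_single (i : Fin n) : xdg (Pi.single i (1, 0)) = 1 := by
  rw [xdg, Finset.sum_eq_single i]
  · simp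
  · intro j _ hj; simp [Pi.single_eq_of_ne hj]
  · simp

lemma shf_sub (δ : Fin n → ℕ) (d : ℕ) : ∀ e : Fin n → ℕ × ℕ, xdg e = d →
    zmon e - shf δ (zmon e) ∈ XLT n d := by
  induction d with
  | zero =>
    intro e he
    have h0 : ∀ i, (e i).1 = 0 := fun i => (Finset.sum_eq_zero_iff.1 he) i (Finset.mem_univ i)
    have : shf δ (zmon e) = zmon e := by
      simp [zmon, zp, h0, shf]
    rw [this, sub_self]; exact Submodule.zero_mem _
  | succ d ih =>
    intro e he
    have : ∃ i, (e i).1 ≠ 0 := by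
      by_contra h
      push Not at h
      rw [xdg, Finset.sum_eq_zero (fun i _ => h i)] at he
      omega
    obtain ⟨i, hi⟩ := this
    obtain ⟨e', he'⟩ : ∃ e' : Fin n → ℕ × ℕ, e = Pi.single i (1, 0) + e' := by
      refine ⟨Function.update e i ((e i).1 - 1, (e i).2), ?_⟩
      funext j
      by_cases hj : j = i
      · subst hj
        simp only [Pi.add_apply, Pi.single_eq_same, Function.update_self]
        ext <;> simp
        omega
      · simp [hj]
    rw [he', xdg_add, xdg_single] at he
    have hr := ih e' (by omega)
    set r := zmon e' - shf δ (zmon e') with hrdef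
    have hs : shf δ (zmon e') = zmon e' - r := by rw [hrdef]; ring
    have hx : shf δ (X (Sum.inl i)) = X (Sum.inl i) + C (δ i : ℂ) := by simp [shf]
    rw [he', ← zmon_mul, map_mul, zmon_single, hs, hx]
    have : X (Sum.inl i) * zmon e' - (X (Sum.inl i) + C (δ i : ℂ)) * (zmon e' - r) =
        X (Sum.inl i) * r + (δ i : ℂ) • r - (δ i : ℂ) • zmon e' := by
      simp only [smul_eq_C_mul]; ring
    rw [this]
    refine Submodule.sub_mem _ (Submodule.add_mem _ ?_ ?_) ?_
    · have := zmon_mul_XLT (Pi.single i (1, 0)) d hr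
      rw [zmon_single, xdg_single, add_comm] at this
      exact this
    · exact Submodule.smul_mem _ _ (XLT_mono (by omega) hr)
    · exact Submodule.smul_mem _ _ (Submodule.subset_span ⟨e', by omega, rfl⟩)

lemma xdg_perm (e : Fin n → ℕ × ℕ) (σ : Equiv.Perm (Fin n)) : xdg (e ∘ σ) = xdg e :=
  Equiv.sum_comp σ (fun i => (e i).1)

lemma alt_shf_sub (δ : Fin n → ℕ) (e : Fin n → ℕ × ℕ) :
    AltL n (zmon e) - shf δ (AltL n (zmon e)) ∈ XLT n (xdg e) := by
  rw [AltL_zmon, map_sum, ← Finset.sum_sub_distrib]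
  refine Submodule.sum_mem _ fun σ _ => ?_
  rw [map_zsmul, ← smul_sub]
  exact zsmul_mem (shf_sub δ _ _ (xdg_perm e σ)) _

def GLT (n d : ℕ) : Submodule ℂ (MvPolynomial ℕ ℂ) :=
  Submodule.span ℂ {f | ∃ e : Fin n → ℕ × ℕ, xdg e < d ∧ f = Th n (AltL n (zmon e))}

def JA (n d : ℕ) : Submodule ℂ (RR n) :=
  Submodule.span ℂ {f | ∃ e e' : Fin n → ℕ × ℕ, e ≠ 0 ∧ xdg e + xdg e' = d ∧
    f = AltL n (zmon e * AltL n (zmon e'))}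

lemma XLT_GLT {d : ℕ} {f : RR n} (hf : f ∈ XLT n d) : Th n (AltL n f) ∈ GLT n d := by
  induction hf using Submodule.span_induction with
  | mem x h =>
    obtain ⟨e', he', rfl⟩ := h
    exact Submodule.subset_span ⟨_, he', rfl⟩
  | zero => simp
  | add x y _ _ hx hy => simp only [map_add]; exact Submodule.add_mem _ hx hy
  | smul c x _ hx => simp only [map_smul]; exact Submodule.smul_mem _ _ hx

lemma Th_JA {d : ℕ} {f : RR n} (hf : f ∈ JA n d) : Th n f ∈ GLT n d := by
  induction hf using Submodule.span_induction with
  | mem x h =>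
    obtain ⟨e, e', he, hd, rfl⟩ := h
    have h1 := Th_main_part e (zmon e')
    have h2 := XLT_GLT (zmon_mul_XLT e _ (alt_shf_sub (fun i => (e i).2) e'))
    rw [hd] at h2
    have h3 : zmon e * AltL n (zmon e') =
      zmon e * (AltL n (zmon e') - shf (fun i => (e i).2) (AltL n (zmon e')))
        + zmon e * shf (fun i => (e i).2) (AltL n (zmon e')) := by ring
    rw [h3, map_add, map_add]
    refine Submodule.add_mem _ h2 (?_)
    refine Submodule.span_le.2 ?_ h1
    split_ifs with h
    · rw [Set.singleton_subset_iff]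
      refine Submodule.subset_span ⟨e', ?_, rfl⟩
      have : xdg e ≠ 0 := by
        intro h0
        apply he
        funext i
        exact Prod.ext ((Finset.sum_eq_zero_iff.1 h0) i (Finset.mem_univ i)) (congrFun h i)
      omega
    · simp
  | zero => simp
  | add x y _ _ hx hy => simp only [map_add]; exact Submodule.add_mem _ hx hy
  | smul c x _ hx => simp only [map_smul]; exact Submodule.smul_mem _ _ hx

end IndepPart

noncomputable section FinalPart

variable {n : ℕ}

def wtx (n : ℕ) : Fin n ⊕ Fin n → ℕ := Sum.elim (fun _ => 1) (fun _ => 0)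

def xcmp (n d : ℕ) : RR n →ₗ[ℂ] RR n := weightedHomogeneousComponent (wtx n) d

def WH (n d : ℕ) : Submodule ℂ (RR n) := weightedHomogeneousSubmodule ℂ (wtx n) d

lemma cmp_of_mem {d : ℕ} (m : ℕ) {f : RR n} (h : f ∈ WH n d) :
    xcmp n m f = if m = d then f else 0 :=
  weightedHomogeneousComponent_of_mem h

lemma zmon_WH (e : Fin n → ℕ × ℕ) : zmon e ∈ WH n (xdg e) := by
  have h : ∀ i : Fin n, IsWeightedHomogeneous (wtx n) (zp i (e i) : RR n) (e i).1 := by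
    intro i
    have h1 := (isWeightedHomogeneous_X ℂ (wtx n) (Sum.inl i)).pow (e i).1
    have h2 := (isWeightedHomogeneous_X ℂ (wtx n) (Sum.inr i)).pow (e i).2
    have h3 := h1.mul h2
    simpa [wtx, zp] using h3
  exact IsWeightedHomogeneous.prod Finset.univ (fun i => (zp i (e i) : RR n)) (fun i => (e i).1)
    (fun i _ => h i)

lemma AltL_zmon_WH (e : Fin n → ℕ × ℕ) : AltL n (zmon e) ∈ WH n (xdg e) := by
  rw [AltL_zmon]
  refine Submodule.sum_mem _ fun σ _ => zsmul_mem ?_ _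
  have := zmon_WH (e ∘ σ)
  rwa [xdg_perm] at this

lemma AltL_zz_WH (e e' : Fin n → ℕ × ℕ) :
    AltL n (zmon e * AltL n (zmon e')) ∈ WH n (xdg e + xdg e') := by
  rw [AltL_zmon, Finset.mul_sum, map_sum]
  refine Submodule.sum_mem _ fun σ _ => ?_
  rw [mul_smul_comm, map_zsmul, zmon_mul]
  refine zsmul_mem ?_ _
  have := AltL_zmon_WH (e + e' ∘ σ)
  rwa [xdg_add, xdg_perm] at this

def JAll (n : ℕ) : Submodule ℂ (RR n) :=
  Submodule.span ℂ {f | ∃ e e' : Fin n → ℕ × ℕ, e ≠ 0 ∧ f = AltL n (zmon e * AltL n (zmon e'))}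

lemma cmp_JAll (d : ℕ) {f : RR n} (hf : f ∈ JAll n) : xcmp n d f ∈ JA n d := by
  induction hf using Submodule.span_induction with
  | mem x h =>
    obtain ⟨e, e', he, rfl⟩ := h
    rw [cmp_of_mem d (AltL_zz_WH e e')]
    split_ifs with h
    · exact Submodule.subset_span ⟨e, e', he, h.symm, rfl⟩
    · exact Submodule.zero_mem _
  | zero => simp
  | add x y _ _ hx hy => rw [map_add]; exact Submodule.add_mem _ hx hy
  | smul c x _ hx => rw [map_smul]; exact Submodule.smul_mem _ _ hx

lemma JAll_aux (s r : RR n) (hs : constantCoeff s = 0) : AltL n (s * AltL n r) ∈ JAll n := by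
  induction r using RR_induction with
  | h0 e' =>
    rw [s.as_sum, Finset.sum_mul, map_sum]
    refine Submodule.sum_mem _ fun d hd => ?_
    rw [monomial_eq_zmon, smul_mul_assoc, map_smul]
    refine Submodule.smul_mem _ _ (Submodule.subset_span ⟨_, e', ?_, rfl⟩)
    intro h0
    have : d = 0 := by
      ext i
      rcases i with i | i
      · exact congrArg Prod.fst (congrFun h0 i)
      · exact congrArg Prod.snd (congrFun h0 i)
    rw [mem_support_iff, this] at hd
    exact hd hs
  | h1 c f hf => simp only [map_smul, mul_smul_comm]; exact Submodule.smul_mem _ _ hf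
  | h2 f g hf hg => simp only [map_add, mul_add]; exact Submodule.add_mem _ hf hg

lemma AltL_inv_mem {f : RR n} (hf : f ∈ invIdeal n) : AltL n f ∈ JAll n := by
  rw [invIdeal] at hf
  have : ∀ r, AltL n (r * f) ∈ JAll n := by
    induction hf using Submodule.span_induction with
    | mem s h =>
      intro r
      rw [mul_comm, AltL_symm_mul s r h.1,
        eq_AltL_of_isAlt (s * AltL n r) ?_, map_smul]
      · exact Submodule.smul_mem _ _ (JAll_aux s r h.2)
      · rw [← AltL_symm_mul s r h.1]; exact isAlt_AltL _
    | zero => simp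
    | add x y _ _ hx hy =>
      intro r; rw [mul_add, map_add]; exact Submodule.add_mem _ (hx r) (hy r)
    | smul c x _ hx =>
      intro r; rw [smul_eq_mul, ← mul_assoc]; exact hx _
  simpa using this 1

lemma cmp_inv {g : RR n} (hg : g ∈ invIdeal n) (ha : IsAltPoly n g) (d : ℕ) :
    xcmp n d g ∈ JA n d := by
  apply cmp_JAll
  rw [eq_AltL_of_isAlt g ha, map_smul]
  exact Submodule.smul_mem _ _ (AltL_inv_mem hg)

abbrev DP (n : ℕ) := {a : Fin n → ℕ // IsDyckArea a}

def vD (n : ℕ) (π : DP n) : MvPolynomial ℕ ℂ := Th n (AltL n (zmon (dyE π.1)))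

def DD (n d : ℕ) : Submodule ℂ (MvPolynomial ℕ ℂ) :=
  Submodule.span ℂ (vD n '' {π | xdg (dyE π.1) < d})

lemma DD_mono {d d' : ℕ} (h : d ≤ d') : DD n d ≤ DD n d' :=
  Submodule.span_mono (Set.image_mono fun _ hπ => lt_of_lt_of_le hπ h)

lemma isAlt_sub {f g : RR n} (hf : IsAltPoly n f) (hg : IsAltPoly n g) : IsAltPoly n (f - g) := by
  intro σ
  rw [map_sub, hf σ, hg σ, smul_sub]

lemma isAlt_span {f : RR n} (hf : f ∈ Submodule.span ℂ (Set.range fun π : DP n =>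
    AltL n (zmon (dyE π.1)))) : IsAltPoly n f := by
  induction hf using Submodule.span_induction with
  | mem x h => obtain ⟨π, rfl⟩ := h; exact isAlt_AltL _
  | zero => intro σ; simp
  | add x y _ _ hx hy => intro σ; rw [map_add, hx σ, hy σ, smul_add]
  | smul c x _ hx => intro σ; rw [map_smul, hx σ, smul_comm]

lemma Th_cmp_span (d : ℕ) {f : RR n} (hf : f ∈ Submodule.span ℂ (Set.range fun π : DP n =>
    AltL n (zmon (dyE π.1)))) : Th n (xcmp n d f) ∈ DD n (d + 1) := by
  induction hf using Submodule.span_induction with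
  | mem x h =>
    obtain ⟨π, rfl⟩ := h
    simp only
    rw [cmp_of_mem d (AltL_zmon_WH _)]
    split_ifs with h
    · exact Submodule.subset_span ⟨π, by simp [h], rfl⟩
    · simp
  | zero => simp
  | add x y _ _ hx hy => simp only [map_add]; exact Submodule.add_mem _ hx hy
  | smul c x _ hx => simp only [map_smul]; exact Submodule.smul_mem _ _ hx

lemma claim (d : ℕ) : ∀ e : Fin n → ℕ × ℕ, xdg e = d → Th n (AltL n (zmon e)) ∈ DD n (d + 1) := by
  induction d using Nat.strong_induction_on with
  | _ d ih =>
  intro e he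
  obtain ⟨g, hg, h, hh, hgh⟩ := Submodule.mem_sup.1 (AltL_mem_TT (zmon e))
  have hga : IsAltPoly n g := by
    rw [eq_sub_of_add_eq hgh]; exact isAlt_sub (isAlt_AltL _) (isAlt_span hh)
  have h1 : AltL n (zmon e) = xcmp n d g + xcmp n d h := by
    rw [← map_add, hgh, cmp_of_mem d (AltL_zmon_WH e), if_pos he.symm]
  rw [h1, map_add]
  refine Submodule.add_mem _ ?_ (Th_cmp_span d hh)
  have h2 := Th_JA (cmp_inv hg hga d)
  refine Submodule.span_le.2 ?_ h2
  rintro _ ⟨e', he', rfl⟩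
  exact DD_mono (by omega) (ih _ he' e' rfl)

lemma GLT_le_DD (d : ℕ) : GLT n d ≤ DD n d := by
  refine Submodule.span_le.2 ?_
  rintro _ ⟨e', he', rfl⟩
  exact DD_mono (by omega) (claim _ e' rfl)

lemma Th_AltL_mem (f : RR n) : Th n (AltL n f) ∈ Submodule.span ℂ (Set.range (vD n)) := by
  induction f using RR_induction with
  | h0 e =>
    exact Submodule.span_mono (Set.image_subset_range _ _) (claim _ e rfl)
  | h1 c f hf => simp only [map_smul]; exact Submodule.smul_mem _ _ hf
  | h2 f g hf hg => simp only [map_add]; exact Submodule.add_mem _ hf hg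

/-! lower bound on the span -/

def jj (a : Fin n → ℕ) (i : Fin n) : ℕ := i + a i.rev

lemma dyck_le {a : Fin n → ℕ} (h : IsDyckArea a) (k : ℕ) : ∀ hk : k < n, a ⟨k, hk⟩ ≤ k := by
  induction k with
  | zero => intro hk; rw [h.1 ⟨0, hk⟩ rfl]
  | succ k ih =>
    intro hk
    have := h.2 ⟨k, by omega⟩ ⟨k + 1, hk⟩ rfl
    have := ih (by omega)
    omega

lemma jj_lt {a : Fin n → ℕ} (h : IsDyckArea a) (i : Fin n) : jj a i < n := by
  have := dyck_le h i.rev.val i.rev.isLt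
  have h2 := Fin.val_rev i
  have : a i.rev ≤ i.rev := this
  rw [jj]; omega

lemma jj_mono {a : Fin n → ℕ} (h : IsDyckArea a) : Monotone (jj a) := by
  rcases n with _ | n
  · intro i; exact i.elim0
  rw [Fin.monotone_iff_le_succ]
  intro i
  have := h.2 (i.succ.rev) (i.castSucc.rev) (by simp [Fin.val_rev]; omega)
  simp only [jj, Fin.val_succ, Fin.val_castSucc]
  omega

lemma jj_inj {a b : Fin n → ℕ} (ha : IsDyckArea a) (hb : IsDyckArea b)
    (h : ∏ i, (X (jj a i) : MvPolynomial ℕ ℂ) = ∏ i, X (jj b i)) : a = b := by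
  have hm : ∀ a : Fin n → ℕ, ∏ i, (X (jj a i) : MvPolynomial ℕ ℂ) =
      monomial (Multiset.toFinsupp (Multiset.ofList (List.ofFn (jj a)))) 1 := by
    intro a
    have : Multiset.toFinsupp (Multiset.ofList (List.ofFn (jj a))) =
        ∑ i, Finsupp.single (jj a i) 1 := by
      have h1 : (Multiset.ofList (List.ofFn (jj a))) = ∑ i, {jj a i} := by
        rw [← Fin.univ_val_map, Finset.sum_eq_multiset_sum,
          ← Multiset.sum_map_singleton (Finset.univ.val.map (jj a)), Multiset.map_map]
        rfl
      rw [h1, map_sum]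
      simp
    rw [this]
    simp only [X]
    rw [monomial_sum_one]
  rw [hm, hm] at h
  have h1 := monomial_left_injective one_ne_zero h
  have h2 := Multiset.toFinsupp.injective h1
  have h3 := Multiset.coe_eq_coe.1 h2
  have h4 := List.Perm.eq_of_sortedLE (jj_mono ha).sortedLE_ofFn (jj_mono hb).sortedLE_ofFn h3
  have h5 := List.ofFn_injective h4
  funext k
  have := congrFun h5 k.rev
  simp only [jj, Fin.rev_rev] at this
  omega

def lagr (n : ℕ) (i : Fin n) : Polynomial ℂ :=
  Lagrange.basis Finset.univ (fun k : Fin n => ((k : ℕ) : ℂ)) i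

lemma lagr_eval (i k : Fin n) : (lagr n i).eval ((k : ℕ) : ℂ) = if k = i then 1 else 0 := by
  have hinj : Set.InjOn (fun k : Fin n => ((k : ℕ) : ℂ)) (Finset.univ : Finset (Fin n)) := by
    intro x _ y _ h
    have h' : ((x : ℕ) : ℂ) = ((y : ℕ) : ℂ) := h
    exact Fin.ext (by exact_mod_cast h')
  split_ifs with h
  · subst h
    exact Lagrange.eval_basis_self hinj (Finset.mem_univ _)
  · exact Lagrange.eval_basis_of_ne (v := fun k : Fin n => ((k : ℕ) : ℂ)) (Ne.symm h)
      (Finset.mem_univ _)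

def f0 (a : Fin n → ℕ) : RR n :=
  (∏ i, Polynomial.aeval (X (Sum.inl i) : RR n) (lagr n i)) * ∏ i, X (Sum.inr i) ^ a i.rev

lemma evx_f0 (a : Fin n → ℕ) (u : Fin n → Fin n) : evx (fun i => (u i : ℕ)) (f0 a) =
    (∏ i, (if u i = i then 1 else 0 : ℂ)) • ∏ i, X i ^ a i.rev := by
  rw [f0, map_mul, map_prod, map_prod, smul_eq_C_mul, map_prod]
  congr 1
  · refine Finset.prod_congr rfl fun i _ => ?_
    rw [← Polynomial.aeval_algHom_apply, ← lagr_eval]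
    have : evx (fun i => (u i : ℕ)) (X (Sum.inl i)) = algebraMap ℂ _ ((u i : ℕ) : ℂ) := by
      simp [evx]
    rw [this, Polynomial.aeval_algebraMap_apply]
    simp [MvPolynomial.algebraMap_eq]
  · refine Finset.prod_congr rfl fun i _ => ?_
    simp [evx]

lemma Th_f0 {a : Fin n → ℕ} (ha : IsDyckArea a) :
    Th n (AltL n (f0 a)) = ∏ i, (X (jj a i) : MvPolynomial ℕ ℂ) := by
  rw [Th_AltL, Finset.sum_eq_single 1]
  · rw [pr_apply, evx_f0]
    simp only [Equiv.Perm.sign_one, Units.val_one, one_smul, Equiv.Perm.one_apply, if_true,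
      Finset.prod_const_one]
    rw [← mul_one (∏ i : Fin n, (X i : MvPolynomial (Fin n) ℂ) ^ a i.rev),
      LL_ymul _ (fun i => a i.rev)]
    have : (1 : MvPolynomial (Fin n) ℂ) = monomial 0 1 := by simp
    rw [this, LL_monomial]
    refine Finset.prod_congr rfl fun i _ => ?_
    simp only [Pi.add_apply, Finsupp.coe_zero, Pi.zero_apply, add_zero]
    exact if_pos (jj_lt ha i)
  · intro σ _ hσ
    rw [pr_apply, evx_f0]
    have : ∃ i, σ i ≠ i := by
      by_contra h
      push Not at h
      exact hσ (Equiv.ext h)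
    obtain ⟨i, hi⟩ := this
    rw [Finset.prod_eq_zero (Finset.mem_univ i) (if_neg hi)]
    simp
  · simp

instance DP_finite : Finite (DP n) := by
  have : Function.Injective (fun (π : DP n) (i : Fin n) =>
      (⟨π.1 i, lt_of_le_of_lt (dyck_le π.2 i.1 i.2) i.2⟩ : Fin n)) := by
    intro π ρ h
    apply Subtype.ext
    funext i
    exact congrArg Fin.val (congrFun h i)
  exact Finite.of_injective _ this

lemma vD_indep : LinearIndependent ℂ (vD n) := by
  have := Fintype.ofFinite (DP n)
  rw [linearIndependent_iff_card_le_finrank_span]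
  have hw : LinearIndependent ℂ (fun π : DP n => ∏ i, (X (jj π.1 i) : MvPolynomial ℕ ℂ)) := by
    have h1 := (basisMonomials ℕ ℂ).linearIndependent
    let m : DP n → (ℕ →₀ ℕ) := fun π => ∑ i, Finsupp.single (jj π.1 i) 1
    have hm : ∀ π, ∏ i, (X (jj π.1 i) : MvPolynomial ℕ ℂ) = monomial (m π) 1 := by
      intro π
      simp only [X, m]
      rw [monomial_sum_one]
    have hi : Function.Injective m := by
      intro π ρ h
      apply Subtype.ext
      apply jj_inj π.2 ρ.2
      rw [hm, hm, h]
    have h2 := h1.comp m hi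
    have h5 : (fun π : DP n => ∏ i, (X (jj π.1 i) : MvPolynomial ℕ ℂ)) =
        (basisMonomials ℕ ℂ) ∘ m := by
      funext π
      rw [hm]; simp
    rw [h5]
    exact h2
  have h3 := finrank_span_eq_card hw
  rw [← h3]
  have : FiniteDimensional ℂ (Submodule.span ℂ (Set.range (vD n))) :=
    FiniteDimensional.span_of_finite ℂ (Set.finite_range _)
  apply Submodule.finrank_mono
  rw [Submodule.span_le]
  rintro _ ⟨π, rfl⟩
  simp only [SetLike.mem_coe]
  rw [← Th_f0 π.2]
  exact Th_AltL_mem _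

lemma indep_main : LinearIndependent ℂ (fun π : {a : Fin n → ℕ // IsDyckArea a} =>
      Ideal.Quotient.mk (invIdeal n)
        (biVandermonde n (fun i => (dinvSeq π.1 i, π.1 i)))) := by
  have := Fintype.ofFinite (DP n)
  rw [Fintype.linearIndependent_iff]
  intro c hc π0
  set g : RR n := ∑ π : DP n, c π • AltL n (zmon (dyE π.1)) with hg
  have hgs : g ∈ Submodule.span ℂ (Set.range fun π : DP n => AltL n (zmon (dyE π.1))) :=
    Submodule.sum_mem _ fun π _ => Submodule.smul_mem _ _ (Submodule.subset_span ⟨π, rfl⟩)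
  have hgI : g ∈ invIdeal n := by
    rw [← Ideal.Quotient.eq_zero_iff_mem, ← hc, hg, map_sum]
    refine Finset.sum_congr rfl fun π _ => ?_
    rw [biVandermonde_eq]; rfl
  set d := xdg (dyE π0.1) with hd
  have h1 := GLT_le_DD d (Th_JA (cmp_inv hgI (isAlt_span hgs) d))
  have h2 : Th n (xcmp n d g) = ∑ π : DP n, (if xdg (dyE π.1) = d then c π else 0) • vD n π := by
    rw [hg, map_sum, map_sum]
    refine Finset.sum_congr rfl fun π _ => ?_
    rw [map_smul, map_smul, cmp_of_mem d (AltL_zmon_WH _)]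
    by_cases h : xdg (dyE π.1) = d
    · rw [if_pos h.symm, if_pos h]; rfl
    · rw [if_neg (Ne.symm h), if_neg h]; simp
  have hdis := vD_indep (n := n).disjoint_span_image (s := {π | xdg (dyE π.1) = d})
    (t := {π | xdg (dyE π.1) < d}) (by
      rw [Set.disjoint_left]; intro π hπ hπ'
      simp only [Set.mem_setOf_eq] at hπ hπ'; omega)
  have h3 : Th n (xcmp n d g) = 0 := by
    refine Submodule.disjoint_def.1 hdis _ ?_ h1
    rw [h2]
    refine Submodule.sum_mem _ fun π _ => ?_
    split_ifs with h
    · exact Submodule.smul_mem _ _ (Submodule.subset_span ⟨π, h, rfl⟩)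
    · simp
  rw [h2] at h3
  have h4 := Fintype.linearIndependent_iff.1 vD_indep _ h3 π0
  simpa [hd] using h4

end FinalPart

/-- The images in `DR_n` of the bivariate Vandermonde determinants `Δ_{X(π)}`,
as `π` ranges over Dyck paths of semilength `n`, form a `ℂ`-vector-space basis
of the ideal `A` of `DR_n` generated by the alternating polynomials: they are
linearly independent and span `A`. -/
theorem biVandermonde_basis_of_altIdeal (n : ℕ) (hn : 1 ≤ n) :
    LinearIndependent ℂ (fun π : {a : Fin n → ℕ // IsDyckArea a} =>
      Ideal.Quotient.mk (invIdeal n)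
        (biVandermonde n (fun i => (dinvSeq π.1 i, π.1 i)))) ∧
    Submodule.span ℂ (Set.range (fun π : {a : Fin n → ℕ // IsDyckArea a} =>
      Ideal.Quotient.mk (invIdeal n)
        (biVandermonde n (fun i => (dinvSeq π.1 i, π.1 i))))) =
      Submodule.restrictScalars ℂ (altIdeal n) := by
  exact ⟨indep_main, span_main⟩
end

section
/- For any Dyck path π of semilength n, the n pairs (d_1,a_1),…,(d_n,a_n) formed from its dinv sequence and area sequence are pairwise distinct. -/
/-- If `i < j` have equal area then the dinv strictly drops. -/
theorem dinvSeq_lt_of_lt {n : ℕ} (a : Fin n → ℕ) {i j : Fin n} (hij : i < j)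
    (h : a i = a j) : dinvSeq a j < dinvSeq a i := by
  unfold dinvSeq
  apply Finset.card_lt_card
  rw [Finset.ssubset_iff_of_subset]
  · exact ⟨j, by simp [hij, h], by simp⟩
  · intro k hk
    simp only [Finset.mem_filter, Finset.mem_univ, true_and] at hk ⊢
    rw [h]
    exact ⟨hij.trans hk.1, hk.2⟩

/-- The (dinv, area) pairs of a Dyck path are pairwise distinct. -/
theorem dinv_area_pairs_distinct {n : ℕ} (a : Fin n → ℕ) (ha : IsDyckArea a) :
    Function.Injective (fun i : Fin n => (dinvSeq a i, a i)) := by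
  intro i j hij
  simp only [Prod.mk.injEq] at hij
  obtain ⟨hd, h⟩ := hij
  rcases lt_trichotomy i j with hlt | heq | hlt
  · have := dinvSeq_lt_of_lt a hlt h
    omega
  · exact heq
  · have := dinvSeq_lt_of_lt a hlt h.symm
    omega
end
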